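/- arXiv:cs/0504027 — 7 statements merged into one kernel-verified Lean document; each statement's English description precedes it below -/
import Mathlib

section
/- Let 0 ≤ j ≤ k be non-negative integers and let C be a class of finite τ-structures whose complement ¬C is the ideal generated by finitely many τ-structures B_1,…,B_m (that is, a structure A lies in ¬C if and only if A → B_i for some i). Suppose that for all finite τ-structures A and B, if A ∈ C and the Duplicator has a winning strategy for the (j,k)-pebble-relation game on A and B, then B ∈ C. Then ¬C has an obstruction set all of whose members have pathwidth at most (j,k). -/
/-- A relational structure over vocabulary `σ` with arities `ar`. -/
structure Struct (σ : Type) (ar : σ → ℕ) where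
  carrier : Type
  rel : ∀ s : σ, Set (Fin (ar s) → carrier)

namespace Struct

variable {σ : Type} {ar : σ → ℕ}

/-- `h` is a homomorphism from `A` to `B`. -/
def IsHom (A B : Struct σ ar) (h : A.carrier → B.carrier) : Prop :=
  ∀ s (t : Fin (ar s) → A.carrier), t ∈ A.rel s → (fun i => h (t i)) ∈ B.rel s

/-- `A` homomorphically maps to `B`. -/
def HomTo (A B : Struct σ ar) : Prop := ∃ h, IsHom A B h

/-- `f : I → B` is a homomorphism from the induced substructure `A|I` to `B`. -/
def IsPHom (A B : Struct σ ar) (I : Set A.carrier) (f : ↥I → B.carrier) : Prop :=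
  ∀ s (t : Fin (ar s) → A.carrier) (ht : ∀ i, t i ∈ I),
    t ∈ A.rel s → (fun i => f ⟨t i, ht i⟩) ∈ B.rel s

/-- `S_1,…,S_n` is a path-decomposition of `A`. -/
def IsPathDecomp (A : Struct σ ar) {n : ℕ} (S : Fin n → Set A.carrier) : Prop :=
  (∀ s (t : Fin (ar s) → A.carrier), t ∈ A.rel s → ∃ i, ∀ m, t m ∈ S i) ∧
  (∀ a : A.carrier, ∀ i l p : Fin n, i ≤ l → l ≤ p → a ∈ S i → a ∈ S p → a ∈ S l)

/-- The path-decomposition `S` has width at most `(j,k)`. -/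
def DecompWidthLE {A : Struct σ ar} {n : ℕ} (S : Fin n → Set A.carrier)
    (j k : ℕ) : Prop :=
  (∀ i, (S i).Finite ∧ (S i).ncard ≤ k) ∧
  (∀ i : Fin n, ∀ h : (i : ℕ) + 1 < n, (S i ∩ S ⟨(i : ℕ) + 1, h⟩).ncard ≤ j)

/-- `A` has pathwidth at most `(j,k)`. -/
def PathwidthLE (A : Struct σ ar) (j k : ℕ) : Prop :=
  ∃ (n : ℕ) (S : Fin n → Set A.carrier), IsPathDecomp A S ∧ DecompWidthLE S j k

end Struct

/-- Restriction of a function with domain `I` to a subdomain `I'`. -/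
def resFun {α β : Type} {I I' : Set α} (h : I' ⊆ I) (f : ↥I → β) : ↥I' → β :=
  fun x => f ⟨x.1, h x.2⟩

/-- Restriction of a relation (set of functions) with domain `I` to `I'`. -/
def resRel {α β : Type} {I I' : Set α} (h : I' ⊆ I) (T : Set (↥I → β)) :
    Set (↥I' → β) :=
  resFun h '' T

/-- `H` is a winning strategy for the Duplicator in the `(j,k)`-pebble-relation
game on `A` and `B`.  `H I` is the set of relations in `H` having domain `I`. -/
def IsWinning {σ : Type} {ar : σ → ℕ} (A B : Struct σ ar) (j k : ℕ)
    (H : ∀ I : Set A.carrier, Set (Set (↥I → B.carrier))) : Prop :=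
  (∃ I, ∃ T, T ∈ H I) ∧
  (∀ I, ∀ T ∈ H I, I.Finite ∧ I.ncard ≤ k) ∧
  (∀ I, ∀ T ∈ H I, T.Nonempty ∧ ∀ f ∈ T, Struct.IsPHom A B I f) ∧
  (∀ I, ∀ T ∈ H I, ∀ I' : Set A.carrier, ∀ h : I' ⊆ I, resRel h T ∈ H I') ∧
  (∀ I, ∀ T ∈ H I, I.ncard ≤ j → ∀ I' : Set A.carrier, ∀ h : I ⊆ I',
    I'.Finite → I'.ncard ≤ k → ∃ T' ∈ H I', resRel h T' ⊆ T)

/-- The Duplicator has a winning strategy for the `(j,k)`-pebble-relation game. -/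
def HasWinStrategy {σ : Type} {ar : σ → ℕ} (A B : Struct σ ar) (j k : ℕ) : Prop :=
  ∃ H, IsWinning A B j k H

/-!
Since `C` is closed upwards under homomorphisms, its members of pathwidth at most `(j,k)` form the
desired obstruction set as soon as each `A ∈ C` receives a homomorphism from one of them. To find
it, play the game on `A` and `B i`: Duplicator's relations are those of the form
`{g ∘ x | g : P → B i}`, where `P → A` has bounded pathwidth and the pebbles `x : I → P` lie over
`I ⊆ A` and are still open at the end of the decomposition. A move of Spoiler glues a new bag to `P`
along the pebbles, so this strategy only fails if some `P` does not map to `B i`. It does fail, as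
`B i ∉ C`, and the disjoint union of these `P` over all `i` maps to no `B i`, hence lies in `C`.
-/

namespace Struct

variable {σ : Type} {ar : σ → ℕ} {A B P Q : Struct σ ar}

theorem IsHom.comp {g : P.carrier → B.carrier} {h : A.carrier → P.carrier}
    (hg : IsHom P B g) (hh : IsHom A P h) : IsHom A B (g ∘ h) :=
  fun s t ht => hg s _ (hh s t ht)

theorem HomTo.refl (A : Struct σ ar) : HomTo A A := ⟨id, fun _ _ ht => ht⟩

theorem HomTo.trans : HomTo A P → HomTo P B → HomTo A B :=
  fun ⟨h, hh⟩ ⟨g, hg⟩ => ⟨g ∘ h, hg.comp hh⟩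

/-- The substructure of `A` induced on `I`, with the subtype of `I` as its universe. -/
abbrev induce (A : Struct σ ar) (I : Set A.carrier) : Struct σ ar where
  carrier := I
  rel s := {t | (fun i => (t i : A.carrier)) ∈ A.rel s}

theorem isPHom_iff_isHom_induce {I : Set A.carrier} {f : I → B.carrier} :
    IsPHom A B I f ↔ IsHom (A.induce I) B f :=
  ⟨fun hf s t ht => hf s (fun i => t i) (fun i => (t i).2) ht,
    fun hf s t hI ht => hf s (fun i => ⟨t i, hI i⟩) ht⟩

theorem isHom_induce_val (A : Struct σ ar) (I : Set A.carrier) :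
    IsHom (A.induce I) A Subtype.val :=
  fun _ _ ht => ht

theorem isHom_induce_inclusion {I' I : Set A.carrier} (h : I' ⊆ I) :
    IsHom (A.induce I') (A.induce I) (Set.inclusion h) :=
  fun _ _ ht => ht

/-- The union of the images of `P` and `Q` under maps into a common universe `γ`. It serves both for
disjoint unions and for gluing two structures along the overlap of the ranges of `e` and `f`. -/
abbrev amalgam {γ : Type} (e : P.carrier → γ) (f : Q.carrier → γ) : Struct σ ar where
  carrier := γ
  rel s := (e ∘ ·) '' P.rel s ∪ (f ∘ ·) '' Q.rel s

section Amalgam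

variable {γ : Type} {e : P.carrier → γ} {f : Q.carrier → γ}

theorem isHom_amalgam_iff {g : γ → B.carrier} :
    IsHom (amalgam e f) B g ↔ IsHom P B (g ∘ e) ∧ IsHom Q B (g ∘ f) := by
  constructor
  · exact fun hg => ⟨fun s t ht => hg s (e ∘ t) (.inl ⟨t, ht, rfl⟩),
      fun s t ht => hg s (f ∘ t) (.inr ⟨t, ht, rfl⟩)⟩
  · rintro ⟨hP, hQ⟩ s _ (⟨t, ht, rfl⟩ | ⟨t, ht, rfl⟩)
    exacts [hP s t ht, hQ s t ht]

theorem isHom_amalgam_right (e : P.carrier → γ) (f : Q.carrier → γ) :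
    IsHom Q (amalgam e f) f :=
  fun _ t ht => .inr ⟨t, ht, rfl⟩

variable {n m j k : ℕ} {S : Fin n → Set P.carrier} {R : Fin m → Set Q.carrier}

theorem IsPathDecomp.amalgam (hS : IsPathDecomp P S) (hR : IsPathDecomp Q R)
    (he : e.Injective) (hf : f.Injective)
    (hoverlap : ∀ p q, e p = f q → IsUpperSet {i | p ∈ S i} ∧ IsLowerSet {i | q ∈ R i}) :
    IsPathDecomp (amalgam e f) (Fin.append (fun i => e '' S i) (fun i => f '' R i)) := by
  constructor
  · rintro s _ (⟨t, ht, rfl⟩ | ⟨t, ht, rfl⟩)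
    · obtain ⟨i, hi⟩ := hS.1 s t ht
      exact ⟨Fin.castAdd m i, fun l => by
        rw [Fin.append_left]; exact Set.mem_image_of_mem e (hi l)⟩
    · obtain ⟨i, hi⟩ := hR.1 s t ht
      exact ⟨Fin.natAdd n i, fun l => by
        rw [Fin.append_right]; exact Set.mem_image_of_mem f (hi l)⟩
  · intro a i l r hil hlr hai har
    cases i using Fin.addCases <;> cases l using Fin.addCases <;> cases r using Fin.addCases <;>
      simp only [Fin.append_left, Fin.append_right, Fin.le_def, Fin.val_castAdd,
        Fin.val_natAdd] at hil hlr hai har ⊢ <;>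
      try omega
    case left.left.left i l r =>
      obtain ⟨p, hpi, rfl⟩ := hai
      exact Set.mem_image_of_mem e (hS.2 p i l r hil hlr hpi (he.mem_set_image.1 har))
    case left.left.right i l r =>
      obtain ⟨⟨p, hpi, rfl⟩, q, -, hqp⟩ := hai, har
      exact Set.mem_image_of_mem e ((hoverlap p q hqp.symm).1 hil hpi)
    case left.right.right i l r =>
      obtain ⟨⟨p, -, hpq⟩, q, hqr, rfl⟩ := hai, har
      exact Set.mem_image_of_mem f ((hoverlap p q hpq).2 (by simpa using hlr) hqr)
    case right.right.right i l r =>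
      obtain ⟨q, hqi, rfl⟩ := hai
      exact Set.mem_image_of_mem f
        (hR.2 q i l r (by simpa using hil) (by simpa using hlr) hqi (hf.mem_set_image.1 har))

theorem DecompWidthLE.ncard_inter_le (hS : DecompWidthLE S j k) {i l : Fin n}
    (hl : (l : ℕ) = i + 1) : (S i ∩ S l).ncard ≤ j := by
  obtain ⟨l, hln⟩ := l
  subst hl
  exact hS.2 i hln

theorem DecompWidthLE.amalgam (hS : DecompWidthLE S j k) (hR : DecompWidthLE R j k)
    (he : e.Injective) (hf : f.Injective) (hfin : (Set.range e ∩ Set.range f).Finite)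
    (hcard : (Set.range e ∩ Set.range f).ncard ≤ j) :
    DecompWidthLE (A := amalgam e f)
      (Fin.append (fun i => e '' S i) (fun i => f '' R i)) j k := by
  constructor
  · intro i
    cases i using Fin.addCases with
    | left i =>
      rw [Fin.append_left, Set.ncard_image_of_injective _ he]
      exact ⟨(hS.1 i).1.image e, (hS.1 i).2⟩
    | right i =>
      rw [Fin.append_right, Set.ncard_image_of_injective _ hf]
      exact ⟨(hR.1 i).1.image f, (hR.1 i).2⟩
  · intro i h
    generalize hl : (⟨i + 1, h⟩ : Fin (n + m)) = l
    replace hl : (l : ℕ) = i + 1 := by rw [← hl]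
    cases i using Fin.addCases <;> cases l using Fin.addCases <;>
      simp only [Fin.append_left, Fin.append_right, Fin.val_castAdd, Fin.val_natAdd] at hl ⊢
    case left.left i l =>
      rw [← Set.image_inter he, Set.ncard_image_of_injective _ he]
      exact hS.ncard_inter_le hl
    case left.right i l =>
      exact (Set.ncard_le_ncard
        (Set.inter_subset_inter (Set.image_subset_range _ _) (Set.image_subset_range _ _))
        hfin).trans hcard
    case right.left i l => omega
    case right.right i l =>
      rw [← Set.image_inter hf, Set.ncard_image_of_injective _ hf]
      exact hR.ncard_inter_le (by omega)

end Amalgam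

theorem isPathDecomp_univ (A : Struct σ ar) :
    IsPathDecomp A (fun _ : Fin 1 => Set.univ) :=
  ⟨fun _ _ _ => ⟨0, fun _ => Set.mem_univ _⟩, fun _ _ _ _ _ _ _ _ => Set.mem_univ _⟩

theorem decompWidthLE_univ [Finite A.carrier] {k : ℕ} (j : ℕ) (hk : Nat.card A.carrier ≤ k) :
    DecompWidthLE (A := A) (fun _ : Fin 1 => Set.univ) j k :=
  ⟨fun _ => ⟨Set.finite_univ, by rwa [Set.ncard_univ]⟩, fun _ _ => by omega⟩

/-- The disjoint union of `P` and `Q`, on the sum of their universes. -/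
abbrev disjointUnion (P Q : Struct σ ar) : Struct σ ar :=
  amalgam (P := P) (Q := Q) (Sum.inl : P.carrier → P.carrier ⊕ Q.carrier) Sum.inr

section PathwidthLE

variable {j k : ℕ}

theorem PathwidthLE.disjointUnion (hP : PathwidthLE P j k) (hQ : PathwidthLE Q j k) :
    PathwidthLE (disjointUnion P Q) j k := by
  obtain ⟨⟨n, S, hS, hSw⟩, m, R, hR, hRw⟩ := hP, hQ
  have hdisj : Set.range (Sum.inl : P.carrier → P.carrier ⊕ Q.carrier) ∩ Set.range Sum.inr = ∅ :=
    Set.isCompl_range_inl_range_inr.inf_eq_bot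
  exact ⟨n + m, _, hS.amalgam hR Sum.inl_injective Sum.inr_injective (fun _ _ h => by cases h),
    hSw.amalgam hRw Sum.inl_injective Sum.inr_injective (by simp [hdisj]) (by simp [hdisj])⟩

theorem exists_pathwidthLE_homTo_forall_not_homTo {𝓑 : Set (Struct σ ar)} (h𝓑 : 𝓑.Finite)
    (h : ∀ B ∈ 𝓑, ∃ P : Struct σ ar,
      Finite P.carrier ∧ PathwidthLE P j k ∧ HomTo P A ∧ ¬ HomTo P B) :
    ∃ P : Struct σ ar,
      Finite P.carrier ∧ PathwidthLE P j k ∧ HomTo P A ∧ ∀ B ∈ 𝓑, ¬ HomTo P B := by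
  induction 𝓑, h𝓑 using Set.Finite.induction_on with
  | empty =>
    exact ⟨A.induce ∅, inferInstance, ⟨1, _, isPathDecomp_univ _, decompWidthLE_univ j (by simp)⟩,
      ⟨_, isHom_induce_val A ∅⟩, by simp⟩
  | insert _ _ ih =>
    obtain ⟨hB, h𝓑⟩ := Set.forall_mem_insert.1 h
    obtain ⟨P, hPfin, hPw, ⟨p, hp⟩, hPB⟩ := hB
    obtain ⟨Q, hQfin, hQw, ⟨q, hq⟩, hQ𝓑⟩ := ih h𝓑
    refine ⟨disjointUnion P Q, inferInstance, hPw.disjointUnion hQw,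
      ⟨Sum.elim p q, isHom_amalgam_iff.2 ⟨hp, hq⟩⟩, Set.forall_mem_insert.2 ⟨?_, ?_⟩⟩
    · exact fun ⟨g, hg⟩ => hPB ⟨_, (isHom_amalgam_iff.1 hg).1⟩
    · exact fun B hB ⟨g, hg⟩ => hQ𝓑 B hB ⟨_, (isHom_amalgam_iff.1 hg).2⟩

end PathwidthLE

/-- `P` is a finite structure over `A` of pathwidth at most `(j,k)` in which `x` pebbles a copy of
the at most `k` elements of `I`. That each set of bags containing a given pebble is upward closed
means that no pebble is dropped before the end of the decomposition, so that new bags can be glued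
to `P` along the pebbles. -/
structure IsPebbledOver (A : Struct σ ar) (j k : ℕ) {I : Set A.carrier} (P : Struct σ ar)
    (x : I → P.carrier) : Prop where
  ncard_le : I.ncard ≤ k
  finite : Finite P.carrier
  isHom_pebble : IsHom (A.induce I) P x
  exists_leftInverse : ∃ h, IsHom P A h ∧ ∀ a, h (x a) = a
  exists_decomp : ∃ (n : ℕ) (S : Fin n → Set P.carrier),
    IsPathDecomp P S ∧ DecompWidthLE S j k ∧ ∀ a, IsUpperSet {i | x a ∈ S i}

open Classical in
/-- The pebbles on `I'` after gluing a copy of `A.induce I'` to the structure pebbled by `x`: those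
on `I' ∩ I` stay where they are, the others are placed on new elements. -/
noncomputable def extendPebbles {α β : Type} {I : Set α} (x : I → β) (I' : Set α) (a : I') :
    β ⊕ ↥(I' \ I) :=
  if ha : a.1 ∈ I then .inl (x ⟨a, ha⟩) else .inr ⟨a, a.2, ha⟩

section ExtendPebbles

variable {α β : Type} {I I' : Set α} {x : I → β}

theorem resFun_extendPebbles (h : I ⊆ I') : resFun h (extendPebbles x I') = Sum.inl ∘ x :=
  funext fun a => dif_pos a.2

theorem mem_range_of_inl_mem_range_extendPebbles {b : β}
    (hb : Sum.inl b ∈ Set.range (extendPebbles x I')) : b ∈ Set.range x := by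
  obtain ⟨a, ha⟩ := hb
  unfold extendPebbles at ha
  split_ifs at ha with haI
  exact ⟨_, Sum.inl_injective ha⟩

theorem elim_extendPebbles {h : β → α} (hx : ∀ a, h (x a) = a) (a : I') :
    Sum.elim h Subtype.val (extendPebbles x I' a) = a := by
  unfold extendPebbles
  split_ifs
  exacts [hx _, rfl]

theorem range_inl_inter_range_extendPebbles_subset :
    Set.range Sum.inl ∩ Set.range (extendPebbles x I') ⊆ Set.range (Sum.inl ∘ x) := by
  rintro _ ⟨⟨b, rfl⟩, hb⟩
  obtain ⟨a, rfl⟩ := mem_range_of_inl_mem_range_extendPebbles hb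
  exact ⟨a, rfl⟩

end ExtendPebbles

/-- The structure obtained by gluing a copy of `A.induce I'` to `P`, where the elements that lie in
`I` are identified with their pebbles. -/
noncomputable abbrev glueInduce {I : Set A.carrier} (P : Struct σ ar) (x : I → P.carrier)
    (I' : Set A.carrier) : Struct σ ar :=
  amalgam (P := P) (Q := A.induce I') Sum.inl (extendPebbles x I')

namespace IsPebbledOver

variable {j k : ℕ} {I I' : Set A.carrier} {x : I → P.carrier}

theorem injective (hx : IsPebbledOver A j k P x) : x.Injective := by
  obtain ⟨h, -, hh⟩ := hx.exists_leftInverse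
  exact fun a b hab => Subtype.ext (by rw [← hh a, hab, hh b])

theorem finite_domain (hx : IsPebbledOver A j k P x) : I.Finite :=
  have := hx.finite
  Finite.of_injective x hx.injective

theorem homTo (hx : IsPebbledOver A j k P x) : HomTo P A :=
  let ⟨h, hh, _⟩ := hx.exists_leftInverse
  ⟨h, hh⟩

theorem pathwidthLE (hx : IsPebbledOver A j k P x) : PathwidthLE P j k :=
  let ⟨n, S, hS, hSw, _⟩ := hx.exists_decomp
  ⟨n, S, hS, hSw⟩

theorem induce (hI : I.Finite) (hk : I.ncard ≤ k) : IsPebbledOver A j k (A.induce I) id where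
  ncard_le := hk
  finite := hI
  isHom_pebble _ _ ht := ht
  exists_leftInverse := ⟨_, isHom_induce_val A I, fun _ => rfl⟩
  exists_decomp :=
    have : Finite I := hI
    ⟨1, _, isPathDecomp_univ _, decompWidthLE_univ j (by rwa [Nat.card_coe_set_eq]),
      fun _ => isUpperSet_univ⟩

theorem restrict (hx : IsPebbledOver A j k P x) (h : I' ⊆ I) :
    IsPebbledOver A j k P (resFun h x) where
  ncard_le := (Set.ncard_le_ncard h hx.finite_domain).trans hx.ncard_le
  finite := hx.finite
  isHom_pebble := hx.isHom_pebble.comp (isHom_induce_inclusion h)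
  exists_leftInverse :=
    let ⟨g, hg, hgx⟩ := hx.exists_leftInverse
    ⟨g, hg, fun _ => hgx _⟩
  exists_decomp :=
    let ⟨n, S, hS, hSw, hup⟩ := hx.exists_decomp
    ⟨n, S, hS, hSw, fun _ => hup _⟩

theorem exists_decomp_glueInduce (hx : IsPebbledOver A j k P x) (hj : I.ncard ≤ j) (hI' : I'.Finite)
    (hk : I'.ncard ≤ k) :
    ∃ (n : ℕ) (S : Fin n → Set (glueInduce P x I').carrier),
      IsPathDecomp (glueInduce P x I') S ∧ DecompWidthLE S j k ∧
      ∀ a, IsUpperSet {i | extendPebbles x I' a ∈ S i} := by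
  have := hI'.to_subtype
  have := hx.finite_domain.to_subtype
  obtain ⟨h, -, hhx⟩ := hx.exists_leftInverse
  obtain ⟨n, S, hS, hSw, hup⟩ := hx.exists_decomp
  have hinj : (extendPebbles x I').Injective := fun a b hab =>
    Subtype.ext (by rw [← elim_extendPebbles hhx a, hab, elim_extendPebbles hhx b])
  have hoverlap : (Set.range Sum.inl ∩ Set.range (extendPebbles x I')).ncard ≤ j := calc
    _ ≤ (Set.range (Sum.inl ∘ x)).ncard :=
      Set.ncard_le_ncard range_inl_inter_range_extendPebbles_subset (Set.finite_range _)
    _ = I.ncard := by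
      rw [← Nat.card_coe_set_eq, Nat.card_range_of_injective (Sum.inl_injective.comp hx.injective),
        Nat.card_coe_set_eq]
    _ ≤ j := hj
  have hdecomp := hS.amalgam (isPathDecomp_univ (A.induce I')) Sum.inl_injective hinj
    (fun p a hpa => by
      obtain ⟨b, rfl⟩ := mem_range_of_inl_mem_range_extendPebbles ⟨a, hpa.symm⟩
      exact ⟨hup b, isLowerSet_univ⟩)
  refine ⟨n + 1, _, hdecomp, hSw.amalgam
    (decompWidthLE_univ j (by rwa [Nat.card_coe_set_eq])) Sum.inl_injective hinj
    ((Set.finite_range _).inter_of_right _) hoverlap, fun a i l hil hi => ?_⟩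
  refine hdecomp.2 _ i l (Fin.natAdd n 0) hil (Fin.le_last l) hi ?_
  rw [Fin.append_right]
  exact Set.mem_image_of_mem _ (Set.mem_univ a)

theorem extend (hx : IsPebbledOver A j k P x) (hj : I.ncard ≤ j) (hI' : I'.Finite)
    (hk : I'.ncard ≤ k) :
    IsPebbledOver A j k (glueInduce P x I') (extendPebbles x I') where
  ncard_le := hk
  finite :=
    have := hx.finite
    have := (hI'.sdiff (t := I)).to_subtype
    inferInstance
  isHom_pebble := isHom_amalgam_right _ _
  exists_leftInverse := by
    obtain ⟨h, hh, hhx⟩ := hx.exists_leftInverse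
    refine ⟨Sum.elim h Subtype.val, isHom_amalgam_iff.2 ⟨hh, ?_⟩, elim_extendPebbles hhx⟩
    rw [show Sum.elim h Subtype.val ∘ extendPebbles x I' = Subtype.val from
      funext (elim_extendPebbles hhx)]
    exact isHom_induce_val A I'
  exists_decomp := hx.exists_decomp_glueInduce hj hI' hk

end IsPebbledOver

/-- The relation with domain `I` formed by the positions in `B` of the pebbles `x` under all
homomorphisms from `P` to `B`. -/
def pebbleImages (P B : Struct σ ar) {I : Set A.carrier} (x : I → P.carrier) :
    Set (I → B.carrier) :=
  (· ∘ x) '' {g | IsHom P B g}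

theorem resRel_pebbleImages {I I' : Set A.carrier} (h : I' ⊆ I) (x : I → P.carrier) :
    resRel h (pebbleImages P B x) = pebbleImages P B (resFun h x) :=
  Set.image_image _ _ _

theorem resRel_pebbleImages_extendPebbles_subset {I I' : Set A.carrier} (h : I ⊆ I')
    (x : I → P.carrier) :
    resRel h (pebbleImages (glueInduce P x I') B (extendPebbles x I')) ⊆ pebbleImages P B x := by
  rw [resRel_pebbleImages, resFun_extendPebbles]
  rintro _ ⟨g, hg, rfl⟩
  exact ⟨g ∘ Sum.inl, (isHom_amalgam_iff.1 hg).1, rfl⟩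

/-- Duplicator's strategy of keeping exactly those pebble positions in `B` that extend to a
homomorphism defined on some structure pebbled over `A`. -/
def pebbleStrategy (A B : Struct σ ar) (j k : ℕ) (I : Set A.carrier) :
    Set (Set (I → B.carrier)) :=
  {T | ∃ (P : Struct σ ar) (x : I → P.carrier), IsPebbledOver A j k P x ∧ T = pebbleImages P B x}

theorem isWinning_pebbleStrategy {j k : ℕ}
    (h : ∀ P : Struct σ ar, Finite P.carrier → PathwidthLE P j k → HomTo P A → HomTo P B) :
    IsWinning A B j k (pebbleStrategy A B j k) := by
  refine ⟨⟨∅, _, _, _, .induce Set.finite_empty (by simp), rfl⟩, ?_, ?_, ?_, ?_⟩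
  · rintro I _ ⟨P, x, hx, rfl⟩
    exact ⟨hx.finite_domain, hx.ncard_le⟩
  · rintro I _ ⟨P, x, hx, rfl⟩
    refine ⟨Set.Nonempty.image _ (h P hx.finite hx.pathwidthLE hx.homTo), ?_⟩
    rintro _ ⟨g, hg, rfl⟩
    exact isPHom_iff_isHom_induce.2 (IsHom.comp hg hx.isHom_pebble)
  · rintro I _ ⟨P, x, hx, rfl⟩ I' hI'
    exact ⟨P, _, hx.restrict hI', resRel_pebbleImages hI' x⟩
  · rintro I _ ⟨P, x, hx, rfl⟩ hj I' hII' hI' hk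
    exact ⟨_, ⟨_, _, hx.extend hj hI' hk, rfl⟩, resRel_pebbleImages_extendPebbles_subset hII' x⟩

end Struct

open Struct in
theorem stmt1_general {σ : Type} {ar : σ → ℕ} (j k : ℕ) (C : Set (Struct σ ar))
    {ι : Type*} [Finite ι] (Bs : ι → Struct σ ar) (hBfin : ∀ i, Finite (Bs i).carrier)
    (hgen : ∀ A : Struct σ ar, Finite A.carrier → (A ∉ C ↔ ∃ i, HomTo A (Bs i)))
    (hclosed : ∀ A B : Struct σ ar, Finite A.carrier → Finite B.carrier →
      A ∈ C → HasWinStrategy A B j k → B ∈ C) :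
    ∃ O : Set (Struct σ ar),
      (∀ P ∈ O, Finite P.carrier ∧ PathwidthLE P j k) ∧
      (∀ A : Struct σ ar, Finite A.carrier → (A ∉ C ↔ ∀ P ∈ O, ¬ HomTo P A)) := by
  refine ⟨{P | Finite P.carrier ∧ PathwidthLE P j k ∧ P ∈ C}, fun P hP => ⟨hP.1, hP.2.1⟩,
    fun A hA => ⟨?_, fun hO hAC => ?_⟩⟩
  · rintro hAC P ⟨hPfin, -, hPC⟩ hPA
    obtain ⟨i, hAB⟩ := (hgen A hA).1 hAC
    exact (hgen P hPfin).2 ⟨i, hPA.trans hAB⟩ hPC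
  have hsep : ∀ B ∈ Set.range Bs, ∃ P : Struct σ ar,
      Finite P.carrier ∧ PathwidthLE P j k ∧ HomTo P A ∧ ¬ HomTo P B := by
    rintro _ ⟨i, rfl⟩
    have hBC : Bs i ∉ C := (hgen (Bs i) (hBfin i)).2 ⟨i, .refl _⟩
    by_contra! h
    exact hBC (hclosed A (Bs i) hA (hBfin i) hAC ⟨_, isWinning_pebbleStrategy h⟩)
  obtain ⟨P, hPfin, hPw, hPA, hPB⟩ :=
    exists_pathwidthLE_homTo_forall_not_homTo (Set.finite_range Bs) hsep
  have hPC : P ∈ C := by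
    by_contra hPC
    obtain ⟨i, hi⟩ := (hgen P hPfin).1 hPC
    exact hPB _ ⟨i, rfl⟩ hi
  exact hO P ⟨hPfin, hPw, hPC⟩ hPA

/-- if the complement of `C` is the ideal generated by finitely many
structures `B_1,…,B_m`, and `C` is preserved by the `(j,k)`-pebble-relation game,
then `¬C` has an obstruction set all of whose members have pathwidth at most `(j,k)`. -/
theorem stmt1 {σ : Type} {ar : σ → ℕ} [Finite σ] (j k : ℕ) (hjk : j ≤ k)
    (C : Set (Struct σ ar)) (m : ℕ) (Bs : Fin m → Struct σ ar)
    (hBfin : ∀ i, Finite (Bs i).carrier)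
    (hgen : ∀ A : Struct σ ar, Finite A.carrier →
      (A ∉ C ↔ ∃ i, Struct.HomTo A (Bs i)))
    (hclosed : ∀ A B : Struct σ ar, Finite A.carrier → Finite B.carrier →
      A ∈ C → HasWinStrategy A B j k → B ∈ C) :
    ∃ O : Set (Struct σ ar),
      (∀ P ∈ O, Finite P.carrier ∧ Struct.PathwidthLE P j k) ∧
      (∀ A : Struct σ ar, Finite A.carrier →
        (A ∉ C ↔ ∀ P ∈ O, ¬ Struct.HomTo P A)) :=
  stmt1_general j k C Bs hBfin hgen hclosed
end

section
/- Let 0 ≤ j ≤ k be non-negative integers and let A and B be τ-structures. The Duplicator has a winning strategy for the (j,k)-pebble-relation game on A and B if and only if the Duplicator has a strict winning strategy for the (j,k)-pebble-relation game on A and B. -/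
/-- `H` is a strict winning strategy: like a winning strategy, but with the
strict `(j,k)`-forth property (d'). -/
def IsStrictWinning {σ : Type} {ar : σ → ℕ} (A B : Struct σ ar) (j k : ℕ)
    (H : ∀ I : Set A.carrier, Set (Set (↥I → B.carrier))) : Prop :=
  (∃ I, ∃ T, T ∈ H I) ∧
  (∀ I, ∀ T ∈ H I, I.Finite ∧ I.ncard ≤ k) ∧
  (∀ I, ∀ T ∈ H I, T.Nonempty ∧ ∀ f ∈ T, Struct.IsPHom A B I f) ∧
  (∀ I, ∀ T ∈ H I, ∀ I' : Set A.carrier, ∀ h : I' ⊆ I, resRel h T ∈ H I') ∧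
  (∀ I, ∀ T ∈ H I, I.ncard ≤ j → ∀ I' : Set A.carrier, ∀ h : I ⊆ I',
    I'.Finite → I'.ncard ≤ k →
      {f : ↥I' → B.carrier | Struct.IsPHom A B I' f ∧ resFun h f ∈ T} ∈ H I')

/-!
Among all homomorphism relations `T'` on `I'` that answer a move from `T`, i.e. whose restriction to
the domain of `T` lies in `T`, there is a largest one, and it is the answer prescribed by the strict
forth property. Closing a winning strategy upwards under inclusion among homomorphism relations
therefore makes it strict.
-/

section PebbleRelationGame

variable {σ : Type} {ar : σ → ℕ} {A B : Struct σ ar} {j k : ℕ}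
  {I I' : Set A.carrier} {H : ∀ I : Set A.carrier, Set (Set (↥I → B.carrier))}

theorem Struct.IsPHom.resFun {f : ↥I → B.carrier} (hf : Struct.IsPHom A B I f) (h : I' ⊆ I) :
    Struct.IsPHom A B I' (resFun h f) :=
  fun s t ht hA => hf s t (fun i => h (ht i)) hA

/-- The relation of all homomorphisms from `A|I'` to `B` that restrict to a member of `T`: the
answer to `T` required by the strict forth property (d'). -/
def homExtension (h : I ⊆ I') (T : Set (↥I → B.carrier)) : Set (↥I' → B.carrier) :=
  {f | Struct.IsPHom A B I' f ∧ resFun h f ∈ T}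

theorem subset_homExtension_iff {h : I ⊆ I'} {T : Set (↥I → B.carrier)}
    {T' : Set (↥I' → B.carrier)} :
    T' ⊆ homExtension h T ↔ (∀ f ∈ T', Struct.IsPHom A B I' f) ∧ resRel h T' ⊆ T := by
  rw [resRel, Set.image_subset_iff]
  exact Set.subset_inter_iff

theorem resRel_homExtension_subset (h : I ⊆ I') (T : Set (↥I → B.carrier)) :
    resRel h (homExtension h T) ⊆ T :=
  (subset_homExtension_iff.mp subset_rfl).2

/-- The upward closure, under inclusion, of a family `H` of relations inside the relations that
consist of homomorphisms. -/
def homUpperClosure (H : ∀ I : Set A.carrier, Set (Set (↥I → B.carrier))) (I : Set A.carrier) :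
    Set (Set (↥I → B.carrier)) :=
  {T | (∀ f ∈ T, Struct.IsPHom A B I f) ∧ ∃ T₀ ∈ H I, T₀ ⊆ T}

theorem resRel_mem_homUpperClosure {T : Set (↥I → B.carrier)}
    (hres : ∀ T₀ ∈ H I, ∀ h : I' ⊆ I, resRel h T₀ ∈ H I')
    (hT : T ∈ homUpperClosure H I) (h : I' ⊆ I) : resRel h T ∈ homUpperClosure H I' := by
  obtain ⟨hom, T₀, hT₀, hsub⟩ := hT
  exact ⟨Set.forall_mem_image.mpr fun f hf => (hom f hf).resFun h,
    resRel h T₀, hres T₀ hT₀ h, Set.image_mono hsub⟩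

theorem homExtension_mem_homUpperClosure {T : Set (↥I → B.carrier)} {h : I ⊆ I'}
    (hom : ∀ T' ∈ H I', ∀ f ∈ T', Struct.IsPHom A B I' f)
    (forth : ∀ T₀ ∈ H I, ∃ T' ∈ H I', resRel h T' ⊆ T₀)
    (hT : T ∈ homUpperClosure H I) : homExtension h T ∈ homUpperClosure H I' := by
  obtain ⟨-, T₀, hT₀, hsub⟩ := hT
  obtain ⟨T', hT', hres⟩ := forth T₀ hT₀
  exact ⟨fun f hf => hf.1, T', hT', subset_homExtension_iff.mpr ⟨hom T' hT', hres.trans hsub⟩⟩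

theorem IsWinning.isStrictWinning_homUpperClosure (hH : IsWinning A B j k H) :
    IsStrictWinning A B j k (homUpperClosure H) := by
  obtain ⟨⟨I₀, T₀, hT₀⟩, hcard, hhom, hres, forth⟩ := hH
  refine ⟨⟨I₀, T₀, (hhom I₀ T₀ hT₀).2, T₀, hT₀, subset_rfl⟩, ?card, ?hom, ?res, ?forth⟩
  case card =>
    rintro I T ⟨-, T₁, hT₁, -⟩
    exact hcard I T₁ hT₁
  case hom =>
    rintro I T ⟨hom, T₁, hT₁, hsub⟩
    exact ⟨(hhom I T₁ hT₁).1.mono hsub, hom⟩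
  case res =>
    intro I T hT I' h
    exact resRel_mem_homUpperClosure (fun T₁ hT₁ => hres I T₁ hT₁ I') hT h
  case forth =>
    intro I T hT hj I' h hfin hk
    exact homExtension_mem_homUpperClosure (fun T' hT' => (hhom I' T' hT').2)
      (fun T₁ hT₁ => forth I T₁ hT₁ hj I' h hfin hk) hT

theorem IsStrictWinning.isWinning (hH : IsStrictWinning A B j k H) : IsWinning A B j k H := by
  obtain ⟨hne, hcard, hhom, hres, forth⟩ := hH
  exact ⟨hne, hcard, hhom, hres, fun I T hT hj I' h hfin hk =>
    ⟨homExtension h T, forth I T hT hj I' h hfin hk, resRel_homExtension_subset h T⟩⟩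

end PebbleRelationGame

theorem stmt4_general {σ : Type} {ar : σ → ℕ} (j k : ℕ) (A B : Struct σ ar) :
    (∃ H, IsWinning A B j k H) ↔ (∃ H, IsStrictWinning A B j k H) :=
  ⟨fun ⟨H, hH⟩ => ⟨homUpperClosure H, hH.isStrictWinning_homUpperClosure⟩,
    fun ⟨H, hH⟩ => ⟨H, hH.isWinning⟩⟩

/-- the Duplicator has a winning strategy for the
`(j,k)`-pebble-relation game on `A` and `B` iff it has a strict one. -/
theorem stmt4 {σ : Type} {ar : σ → ℕ} [Finite σ] (j k : ℕ) (hjk : j ≤ k)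
    (A B : Struct σ ar) :
    (∃ H, IsWinning A B j k H) ↔ (∃ H, IsStrictWinning A B j k H) :=
  stmt4_general j k A B
end

section
/- Every implicational τ-structure B (a finite structure all of whose relations are binary and implicational) has (2,3)-path duality: for every finite τ-structure A that does not homomorphically map to B, there exists a finite τ-structure P of pathwidth at most (2,3) such that P homomorphically maps to A but P does not homomorphically map to B. -/
/-- A relational structure all of whose relations are binary. -/
structure BinStruct (σ : Type) where
  carrier : Type
  rel : σ → Set (carrier × carrier)

namespace BinStruct

variable {σ : Type}

/-- `h` is a homomorphism from `A` to `B`. -/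
def IsHom (A B : BinStruct σ) (h : A.carrier → B.carrier) : Prop :=
  ∀ s, ∀ p ∈ A.rel s, (h p.1, h p.2) ∈ B.rel s

/-- `A` homomorphically maps to `B`. -/
def HomTo (A B : BinStruct σ) : Prop := ∃ h, IsHom A B h

/-- `S_1,…,S_n` is a path-decomposition of `A`. -/
def IsPathDecomp (A : BinStruct σ) {n : ℕ} (S : Fin n → Set A.carrier) : Prop :=
  (∀ s, ∀ p ∈ A.rel s, ∃ i, p.1 ∈ S i ∧ p.2 ∈ S i) ∧
  (∀ a : A.carrier, ∀ i l p : Fin n, i ≤ l → l ≤ p → a ∈ S i → a ∈ S p → a ∈ S l)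

/-- `A` has pathwidth at most `(j,k)`. -/
def PathwidthLE (A : BinStruct σ) (j k : ℕ) : Prop :=
  ∃ (n : ℕ) (S : Fin n → Set A.carrier),
    IsPathDecomp A S ∧
    (∀ i, (S i).Finite ∧ (S i).ncard ≤ k) ∧
    (∀ i : Fin n, ∀ h : (i : ℕ) + 1 < n, (S i ∩ S ⟨(i : ℕ) + 1, h⟩).ncard ≤ j)

end BinStruct

/-- A binary relation is implicational (0/1/all). -/
def Implicational {α : Type} (R : Set (α × α)) : Prop :=
  (∃ B C : Set α, R = B ×ˢ C) ∨
  (∃ (B : Set α) (f : α → α), Set.InjOn f B ∧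
      R = {p | p.1 ∈ B ∧ p.2 = f p.1}) ∨
  (∃ (B C : Set α) (b c : α), b ∈ B ∧ c ∈ C ∧
      R = ({b} ×ˢ C) ∪ (B ×ˢ {c}))

/-!
Call `(u, y)` and `(v, z)` in `A × B` compatible if `u ↦ y`, `v ↦ z` preserves all relations between
`u` and `v`. Since `B` is implicational, the values of `v` compatible with `(u, y)` are either all
the values of `v` that are compatible with some value of `u`, or there is at most one of them.
In the latter case a choice of `y` for `u` forces the value of `v`, and forced values propagate.

If every `a` has a value from which propagation meets no contradiction, then a homomorphism `A → B`
exists: well-order `A` and give each element the value propagated to it from the least possible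
source.

Otherwise, for some `a`, propagation from each value `x` of `a` meets a contradiction. Following one
propagation path forward and the conflicting one backward gives a walk in `A` that refutes `a ↦ x`.
Join these walks over all `x`, and attach every vertex of the result to one common copy of `a`.
The bags consisting of this hub and two consecutive vertices of the walk form a path-decomposition
of width `(2, 3)`, and no value of the hub extends to a homomorphism to `B`.
-/

namespace BinaryConstraint

open Relation

/-- The 0/1/all dichotomy for the rows of `R`: each row has at most one element or contains the
whole range of `R`. Unlike being implicational, this is easily seen to pass to intersections. -/
def RowDichotomy {D E : Type*} (R : D → E → Prop) : Prop :=
  ∀ y, {z | R y z}.Subsingleton ∨ ∀ z, (∃ t, R t z) → R y z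

section RowDichotomy

variable {D E : Type*}

theorem RowDichotomy.forall {ι : Sort*} {R : ι → D → E → Prop} (h : ∀ i, RowDichotomy (R i)) :
    RowDichotomy fun y z => ∀ i, R i y z := by
  intro y
  by_cases hsub : ∃ i, {z | R i y z}.Subsingleton
  · obtain ⟨i, hi⟩ := hsub
    exact .inl (hi.anti fun z hz => hz i)
  · exact .inr fun z ⟨t, ht⟩ i => (h i y).resolve_left (fun hi => hsub ⟨i, hi⟩) z ⟨t, ht i⟩

theorem RowDichotomy.imp {P : Prop} {R : D → E → Prop} (h : RowDichotomy R) :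
    RowDichotomy fun y z => P → R y z :=
  .forall fun _ : P => h

theorem RowDichotomy.and {R S : D → E → Prop} (hR : RowDichotomy R) (hS : RowDichotomy S) :
    RowDichotomy fun y z => R y z ∧ S y z := by
  intro y
  rcases hR y, hS y with ⟨hR | hR, hS | hS⟩
  · exact .inl (hR.anti fun _ hz => hz.1)
  · exact .inl (hR.anti fun _ hz => hz.1)
  · exact .inl (hS.anti fun _ hz => hz.2)
  · exact .inr fun z ⟨t, ht⟩ => ⟨hR z ⟨t, ht.1⟩, hS z ⟨t, ht.2⟩⟩

end RowDichotomy

variable {V D : Type*}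

/-- With variables `V`, values `D` and compatibility relation `C` on assignments `(v, z)`: `p`
forces `q` if no value other than `q.2` of the variable `q.1` is compatible with `p`. The value
`q.2` itself need not be compatible with `p`. -/
def Forces (C : V × D → V × D → Prop) (p q : V × D) : Prop :=
  ∀ z, C p (q.1, z) → z = q.2

/-- Propagating forced values from the assignment `p` meets no contradiction: every assignment
reached can be extended to each further variable, and no variable is given two values. -/
structure PropagationConsistent (C : V × D → V × D → Prop) (p : V × D) : Prop where
  exists_compat : ∀ q, ReflTransGen (Forces C) p q → ∀ v, ∃ z, C q (v, z)
  unique : ∀ q r, ReflTransGen (Forces C) p q → ReflTransGen (Forces C) p r → q.1 = r.1 → q = r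

/-- `HubWalk C p w q r`: the variables in the list `w` can be given values such that they form a
walk from `q` to `r` along `C`, all of whose assignments, `q` included, are compatible with `p`. -/
inductive HubWalk (C : V × D → V × D → Prop) (p : V × D) : List V → V × D → V × D → Prop
  | nil {q} : C p q → HubWalk C p [] q q
  | cons {v z w q r} : C p q → C q (v, z) → HubWalk C p w (v, z) r → HubWalk C p (v :: w) q r

variable {C : V × D → V × D → Prop} {p q r : V × D}

theorem exists_pairwise_compat [Std.Symm C]
    (hC : ∀ u v, RowDichotomy fun y z => C (u, y) (v, z))
    (hcons : ∀ a, ∃ x, PropagationConsistent C (a, x)) :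
    ∃ h : V → D, ∀ u v, C (u, h u) (v, h v) := by
  choose x hx using hcons
  obtain ⟨_, hwf⟩ := exists_wellFoundedLT V
  have least_source (v : V) : ∃ a y, ReflTransGen (Forces C) (a, x a) (v, y) ∧
      ∀ b z, ReflTransGen (Forces C) (b, x b) (v, z) → a ≤ b := by
    obtain ⟨a, ⟨y, hy⟩, hmin⟩ := hwf.wf.has_min
      {a | ∃ y, ReflTransGen (Forces C) (a, x a) (v, y)} ⟨v, x v, .refl⟩
    exact ⟨a, y, hy, fun b z hb => not_lt.1 (hmin b ⟨z, hb⟩)⟩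
  choose source h hreach hleast using least_source
  refine ⟨h, fun u v => ?_⟩
  wlog hle : source u ≤ source v generalizing u v
  · exact symm (this v u (le_of_not_ge hle))
  rcases hC u v (h u) with hsub | hall
  · obtain ⟨z, hz⟩ := (hx (source u)).exists_compat _ (hreach u) v
    have hvz : ReflTransGen (Forces C) (source u, x (source u)) (v, z) :=
      (hreach u).tail fun z' hz' => hsub hz' hz
    have hsource : source u = source v := le_antisymm hle (hleast v _ _ hvz)
    rw [hsource] at hvz
    rwa [(hx (source v)).unique _ _ (hreach v) hvz rfl]
  · obtain ⟨t, ht⟩ := (hx (source v)).exists_compat _ (hreach v) u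
    exact hall _ ⟨t, symm ht⟩

namespace HubWalk

variable {w w' : List V}

theorem compat_start (h : HubWalk C p w q r) : C p q := by
  cases h <;> assumption

theorem exists_of_append (h : HubWalk C p (w ++ w') q r) :
    ∃ m, HubWalk C p w q m ∧ HubWalk C p w' m r := by
  induction w generalizing q with
  | nil => exact ⟨q, .nil h.compat_start, h⟩
  | cons v w ih =>
    obtain _ | ⟨hq, hqv, h⟩ := h
    obtain ⟨m, hm, hm'⟩ := ih h
    exact ⟨m, .cons hq hqv hm, hm'⟩

theorem exists_from_hub (hp : C p p) (h : HubWalk C p w q r) : ∃ r', HubWalk C p w p r' := by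
  cases h with
  | nil => exact ⟨p, .nil hp⟩
  | cons _ _ h => exact ⟨r, .cons hp h.compat_start h⟩

theorem exists_of_getElem (y : Fin w.length → D) (hq : C p q)
    (hhub : ∀ i : Fin w.length, C p (w[i], y i))
    (hstart : ∀ h : 0 < w.length, C q (w[0], y ⟨0, h⟩))
    (hnext : ∀ i (h : i + 1 < w.length), C (w[i], y ⟨i, by lia⟩) (w[i + 1], y ⟨i + 1, h⟩)) :
    ∃ r, HubWalk C p w q r := by
  induction w generalizing q with
  | nil => exact ⟨q, .nil hq⟩
  | cons v w ih =>
    obtain ⟨r, hr⟩ := ih (fun i => y i.succ) (hhub 0) (fun i => hhub i.succ)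
      (fun h => hnext 0 (Nat.succ_lt_succ h)) (fun i h => hnext (i + 1) (Nat.succ_lt_succ h))
    exact ⟨r, .cons hq (hstart (Nat.succ_pos _)) hr⟩

end HubWalk

theorem exists_walk_forward (hq : ReflTransGen (Forces C) p q) :
    ∃ w, ∀ r, HubWalk C p w p r → r = q := by
  induction hq with
  | refl => exact ⟨[], by rintro _ ⟨⟩; rfl⟩
  | @tail q q' _ hforce ih =>
    obtain ⟨w, hw⟩ := ih
    refine ⟨w ++ [q'.1], fun r hr => ?_⟩
    obtain ⟨m, hm, hmr⟩ := hr.exists_of_append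
    obtain rfl := hw m hm
    obtain _ | ⟨_, hmr, ⟨⟩⟩ := hmr
    exact Prod.ext rfl (hforce _ hmr)

-- By symmetry of `C`, if `q` forces `q'` then any other value of `q'.1` excludes `q`.
theorem exists_walk_backward [Std.Symm C] (hq : ReflTransGen (Forces C) p q) (hne : q ≠ p) :
    ∃ w, ∀ m r, m.1 = q.1 → HubWalk C p w m r → m = q := by
  induction hq with
  | refl => exact absurd rfl hne
  | @tail q q' _ hforce ih =>
    by_cases hqp : q = p
    · subst hqp
      refine ⟨[], fun m r hm h => Prod.ext hm (hforce _ ?_)⟩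
      rw [← hm]
      exact h.compat_start
    · obtain ⟨w, hw⟩ := ih hqp
      refine ⟨q.1 :: w, fun m r hm h => Prod.ext hm (hforce _ ?_)⟩
      obtain _ | ⟨_, hmq, h⟩ := h
      have hq := hw _ r (by rfl) h
      rw [← hm, ← hq]
      exact symm hmq

theorem exists_blocking_walk_of_not_consistent [Std.Symm C] (hp : ¬ PropagationConsistent C p) :
    ∃ w, ∀ r, ¬ HubWalk C p w p r := by
  contrapose! hp
  constructor
  · intro q hq v
    obtain ⟨w, hw⟩ := exists_walk_forward hq
    obtain ⟨r, hr⟩ := hp (w ++ [v])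
    obtain ⟨m, hm, hmr⟩ := hr.exists_of_append
    obtain rfl := hw m hm
    obtain _ | ⟨_, hmv, -⟩ := hmr
    exact ⟨_, hmv⟩
  · intro q q' hq hq' hvar
    by_contra hne
    wlog hne' : q' ≠ p generalizing q q'
    · exact this q' q hq' hq hvar.symm (Ne.symm hne) fun h => hne (h.trans (not_not.1 hne').symm)
    obtain ⟨w, hw⟩ := exists_walk_forward hq
    obtain ⟨w', hw'⟩ := exists_walk_backward hq' hne'
    obtain ⟨r, hr⟩ := hp (w ++ w')
    obtain ⟨m, hm, hmr⟩ := hr.exists_of_append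
    obtain rfl := hw m hm
    exact hne (hw' m r hvar hmr)

theorem exists_common_blocking_walk [Finite D] {a : V}
    (hblock : ∀ x, ∃ w, ∀ r, ¬ HubWalk C (a, x) w (a, x) r) :
    ∃ w, ∀ x r, ¬ HubWalk C (a, x) w (a, x) r := by
  suffices h : ∀ X : Set D, ∃ w, ∀ x ∈ X, ∀ r, ¬ HubWalk C (a, x) w (a, x) r by
    simpa using h Set.univ
  intro X
  induction X, X.toFinite using Set.Finite.induction_on with
  | empty => exact ⟨[], by simp⟩
  | @insert x X _ _ ih =>
    obtain ⟨w, hw⟩ := hblock x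
    obtain ⟨w', hw'⟩ := ih
    refine ⟨w ++ w', fun x' hx' r hr => ?_⟩
    obtain ⟨m, hm, hmr⟩ := hr.exists_of_append
    rcases hx' with rfl | hx'
    · exact hw m hm
    · obtain ⟨r', hr'⟩ := hmr.exists_from_hub hr.compat_start
      exact hw' x' hx' r' hr'

end BinaryConstraint

namespace Implicational

open BinaryConstraint

variable {α : Type} {R : Set (α × α)}

theorem rowDichotomy (hR : Implicational R) : RowDichotomy fun y z => (y, z) ∈ R := by
  intro y
  rcases hR with ⟨X, Y, rfl⟩ | ⟨X, f, -, rfl⟩ | ⟨X, Y, b, c, hb, -, rfl⟩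
  · by_cases hy : y ∈ X
    · exact .inr fun z ⟨t, ht⟩ => ⟨hy, ht.2⟩
    · exact .inl fun z hz => absurd hz.1 hy
  · exact .inl fun z hz z' hz' => hz.2.trans hz'.2.symm
  · by_cases hy : y = b
    · exact .inr (by grind)
    · exact .inl (Set.subsingleton_of_subset_singleton (a := c) (by grind))

theorem rowDichotomy_swap (hR : Implicational R) : RowDichotomy fun y z => (z, y) ∈ R := by
  intro y
  rcases hR with ⟨X, Y, rfl⟩ | ⟨X, f, hf, rfl⟩ | ⟨X, Y, b, c, -, hc, rfl⟩
  · by_cases hy : y ∈ Y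
    · exact .inr fun z ⟨t, ht⟩ => ⟨ht.1, hy⟩
    · exact .inl fun z hz => absurd hz.2 hy
  · exact .inl fun z hz z' hz' => hf hz.1 hz'.1 (hz.2.symm.trans hz'.2)
  · by_cases hy : y = c
    · exact .inr (by grind)
    · exact .inl (Set.subsingleton_of_subset_singleton (a := b) (by grind))

end Implicational

namespace BinStruct

open BinaryConstraint

variable {σ : Type}

/-- The assignments `p.1 ↦ p.2` and `q.1 ↦ q.2` preserve all tuples of `A` on `(p.1, q.1)` and on
`(q.1, p.1)`. -/
def Compat (A B : BinStruct σ) (p q : A.carrier × B.carrier) : Prop :=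
  (∀ s, (p.1, q.1) ∈ A.rel s → (p.2, q.2) ∈ B.rel s) ∧
    ∀ s, (q.1, p.1) ∈ A.rel s → (q.2, p.2) ∈ B.rel s

instance (A B : BinStruct σ) : Std.Symm (Compat A B) := ⟨fun _ _ => And.symm⟩

theorem rowDichotomy_compat {B : BinStruct σ} (himp : ∀ s, Implicational (B.rel s))
    (A : BinStruct σ) (u v : A.carrier) : RowDichotomy fun y z => Compat A B (u, y) (v, z) := by
  dsimp only [Compat]
  exact .and (.forall fun s => .imp (himp s).rowDichotomy)
    (.forall fun s => .imp (himp s).rowDichotomy_swap)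

/-- The structure on `X` whose tuples are the pairs in a common bag `S i` that `φ` maps to tuples
of `A`. -/
def bagPullback (A : BinStruct σ) {ι X : Type} (φ : X → A.carrier) (S : ι → Set X) :
    BinStruct σ where
  carrier := X
  rel s := {e | (φ e.1, φ e.2) ∈ A.rel s ∧ ∃ i, e.1 ∈ S i ∧ e.2 ∈ S i}

theorem homTo_bagPullback (A : BinStruct σ) {ι X : Type} (φ : X → A.carrier) (S : ι → Set X) :
    HomTo (bagPullback A φ S) A :=
  ⟨φ, fun _ _ he => he.1⟩

theorem IsHom.compat_of_mem_bag {A B : BinStruct σ} {ι X : Type} {φ : X → A.carrier}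
    {S : ι → Set X} {h : X → B.carrier} (hh : IsHom (bagPullback A φ S) B h) {i : ι} {c d : X}
    (hc : c ∈ S i) (hd : d ∈ S i) : Compat A B (φ c, h c) (φ d, h d) :=
  ⟨fun s hs => hh s (c, d) ⟨hs, i, hc, hd⟩, fun s hs => hh s (d, c) ⟨hs, i, hd, hc⟩⟩

/-- The bags of the fan with hub `none` and rim `some 0, …, some (n - 1)`: bag `i` consists of the
hub and the rim vertices `i - 1` and `i`, as far as they exist. -/
def fanBag (n : ℕ) (i : Fin (n + 1)) : Set (Option (Fin n)) :=
  {c | ∀ j ∈ c, (j : ℕ) = i ∨ (j : ℕ) + 1 = i}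

section fanBag

variable {n : ℕ}

theorem none_mem_fanBag (i : Fin (n + 1)) : none ∈ fanBag n i := by
  simp [fanBag]

theorem some_mem_fanBag {i : Fin (n + 1)} {j : Fin n} :
    some j ∈ fanBag n i ↔ (j : ℕ) = i ∨ (j : ℕ) + 1 = i := by
  simp [fanBag]

theorem mem_fanBag_of_le_of_le {c : Option (Fin n)} {i l m : Fin (n + 1)} (hil : i ≤ l)
    (hlm : l ≤ m) (hi : c ∈ fanBag n i) (hm : c ∈ fanBag n m) : c ∈ fanBag n l := by
  intro j hj
  have hji := hi j hj
  have hjm := hm j hj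
  rw [Fin.le_def] at hil hlm
  lia

theorem ncard_le_card_of_map_val_mem {S : Set (Option (Fin n))} {T : Finset (Option ℕ)}
    (h : ∀ c ∈ S, c.map Fin.val ∈ T) : S.ncard ≤ T.card := by
  rw [← Set.ncard_coe_finset]
  exact Set.ncard_le_ncard_of_injOn _ h (Option.map_injective Fin.val_injective).injOn
    T.finite_toSet

theorem ncard_fanBag_le (i : Fin (n + 1)) : (fanBag n i).ncard ≤ 3 := by
  refine (ncard_le_card_of_map_val_mem (T := {none, some (i : ℕ), some (i - 1 : ℕ)}) ?_).trans
    Finset.card_le_three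
  rintro (_ | j) hj
  · simp
  · rw [some_mem_fanBag] at hj
    simp only [Option.map_some, Finset.mem_insert, Finset.mem_singleton, Option.some.injEq]
    lia

theorem ncard_fanBag_inter_le (i : Fin (n + 1)) (hi : (i : ℕ) + 1 < n + 1) :
    (fanBag n i ∩ fanBag n ⟨i + 1, hi⟩).ncard ≤ 2 := by
  refine (ncard_le_card_of_map_val_mem (T := {none, some (i : ℕ)}) ?_).trans Finset.card_le_two
  rintro (_ | j) ⟨hj, hj'⟩
  · simp
  · rw [some_mem_fanBag] at hj hj'
    simp only [Option.map_some, Finset.mem_insert, Finset.mem_singleton, Option.some.injEq]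
    lia

end fanBag

/-- The fan whose hub is a copy of `a` and whose rim consists of copies of the entries of `w`. -/
def fan (A : BinStruct σ) (a : A.carrier) (w : List A.carrier) : BinStruct σ :=
  bagPullback A (fun c : Option (Fin w.length) => c.elim a w.get) (fanBag w.length)

section fan

variable {A B : BinStruct σ} {a : A.carrier} {w : List A.carrier}

theorem finite_fan : Finite (fan A a w).carrier :=
  inferInstanceAs (Finite (Option (Fin w.length)))

theorem pathwidthLE_fan : PathwidthLE (fan A a w) 2 3 :=
  ⟨w.length + 1, fanBag w.length,
    ⟨fun _ _ he => he.2, fun _ _ _ _ hil hlm => mem_fanBag_of_le_of_le hil hlm⟩,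
    fun i => ⟨Set.toFinite (α := Option (Fin w.length)) _, ncard_fanBag_le i⟩,
    ncard_fanBag_inter_le⟩

theorem IsHom.exists_hubWalk {h : (fan A a w).carrier → B.carrier} (hh : IsHom (fan A a w) B h) :
    ∃ x r, HubWalk (Compat A B) (a, x) w (a, x) r := by
  have mem_bag_left (j : Fin w.length) : some j ∈ fanBag w.length j.castSucc :=
    some_mem_fanBag.2 (.inl rfl)
  have mem_bag_right (j : Fin w.length) : some j ∈ fanBag w.length j.succ :=
    some_mem_fanBag.2 (.inr rfl)
  have compat_hub (j : Fin w.length) :=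
    hh.compat_of_mem_bag (none_mem_fanBag _) (mem_bag_left j)
  exact ⟨h none, HubWalk.exists_of_getElem (fun j => h (some j))
    (hh.compat_of_mem_bag (none_mem_fanBag 0) (none_mem_fanBag 0)) compat_hub
    (fun hpos => compat_hub ⟨0, hpos⟩)
    fun j hj => hh.compat_of_mem_bag (mem_bag_right ⟨j, by lia⟩) (mem_bag_left ⟨j + 1, hj⟩)⟩

end fan

theorem homTo_of_propagationConsistent {A B : BinStruct σ} (himp : ∀ s, Implicational (B.rel s))
    (hcons : ∀ a, ∃ x, PropagationConsistent (Compat A B) (a, x)) : HomTo A B := by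
  obtain ⟨h, hh⟩ := exists_pairwise_compat (rowDichotomy_compat himp A) hcons
  exact ⟨h, fun s p hp => (hh p.1 p.2).1 s hp⟩

end BinStruct

open BinaryConstraint BinStruct in
theorem stmt8_general {σ : Type} (B : BinStruct σ) [Finite B.carrier]
    (himp : ∀ s, Implicational (B.rel s)) (A : BinStruct σ) (hA : ¬ HomTo A B) :
    ∃ P : BinStruct σ, Finite P.carrier ∧ PathwidthLE P 2 3 ∧ HomTo P A ∧ ¬ HomTo P B := by
  obtain ⟨a, ha⟩ : ∃ a, ∀ x, ¬ PropagationConsistent (Compat A B) (a, x) := by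
    contrapose! hA
    exact homTo_of_propagationConsistent himp hA
  obtain ⟨w, hw⟩ := exists_common_blocking_walk fun x =>
    exists_blocking_walk_of_not_consistent (ha x)
  refine ⟨fan A a w, finite_fan, pathwidthLE_fan, homTo_bagPullback A _ _, fun ⟨h, hh⟩ => ?_⟩
  obtain ⟨x, r, hr⟩ := hh.exists_hubWalk
  exact hw x r hr

/-- every finite implicational structure `B` has `(2,3)`-path
duality. -/
theorem stmt8 {σ : Type} [Finite σ] (B : BinStruct σ) (hBfin : Finite B.carrier)
    (himp : ∀ s, Implicational (B.rel s)) :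
    ∀ A : BinStruct σ, Finite A.carrier → ¬ BinStruct.HomTo A B →
      ∃ P : BinStruct σ, Finite P.carrier ∧ BinStruct.PathwidthLE P 2 3 ∧
        BinStruct.HomTo P A ∧ ¬ BinStruct.HomTo P B := by
  exact fun A _ hA => stmt8_general B himp A hA
end

section
/- Let B be an implicational τ-structure and let A be a finite τ-structure over the same vocabulary (all relation symbols binary), and let G be the conflict graph associated to A and B. Then A homomorphically maps to B if and only if for every a ∈ A there exists some b ∈ B such that there is no directed path in G from the node (a,b) to any node in {(a,b') : b' ∈ B, b' ≠ b} ∪ {□}. -/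
/-- The arc relation of the conflict graph associated to an instance `A` and an
implicational structure `B`.  Nodes are pairs `(a,b)` (as `Sum.inl`) together
with the special node `□` (as `Sum.inr ()`). -/
def ConflictEdge {σ : Type} (A B : BinStruct σ) :
    (A.carrier × B.carrier ⊕ Unit) → (A.carrier × B.carrier ⊕ Unit) → Prop :=
  fun x y =>
    (∃ s a a' b b', (a, a') ∈ A.rel s ∧
      B.rel s ∩ {p | p.1 = b} = {(b, b')} ∧
      x = Sum.inl (a, b) ∧ y = Sum.inl (a', b')) ∨
    (∃ s a a' b b', (a, a') ∈ A.rel s ∧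
      B.rel s ∩ {p | p.2 = b'} = {(b, b')} ∧
      x = Sum.inl (a', b') ∧ y = Sum.inl (a, b)) ∨
    (∃ s a a' b, (a, a') ∈ A.rel s ∧
      B.rel s ∩ {p | p.1 = b} = ∅ ∧
      x = Sum.inl (a, b) ∧ y = Sum.inr ()) ∨
    (∃ s a a' b', (a, a') ∈ A.rel s ∧
      B.rel s ∩ {p | p.2 = b'} = ∅ ∧
      x = Sum.inl (a', b') ∧ y = Sum.inr ())

/-!
An implicational relation `R` has the 0/1/all property: if `(b, c) ∉ R` although row `b` and column
`c` are both nonempty, then `b` and `c` each have exactly one partner in `R`. Hence the conflict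
graph is skew-symmetric, like the implication graph of a 2-SAT instance: a path from `(a, b)` to
`(a', b')` yields, for every `c ≠ b'`, a path from `(a', c)` to `□` or to some `(a, d)` with `d ≠ b`.

Homomorphisms correspond to those sets of nodes that are closed under arcs, avoid `□`, and contain
exactly one node over each `a`. As for 2-SAT, such a set is grown greedily: if `a` is not yet
covered, add everything reachable from a node `(a, b)` with no path to `□` or to another node over
`a`. By skew-symmetry the new nodes agree with each other and with the old ones, so a maximal set
(Zorn) covers all of `A`.
-/

open Relation (ReflTransGen)

section Slices

variable {α β : Type*} {R : Set (α × β)} {a : α} {b : β}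

theorem inter_fst_eq_singleton_iff :
    R ∩ {p | p.1 = a} = {(a, b)} ↔ (a, b) ∈ R ∧ ∀ z, (a, z) ∈ R → z = b := by
  rw [Set.eq_singleton_iff_unique_mem]
  constructor
  · exact fun ⟨hmem, huniq⟩ => ⟨hmem.1, fun z hz => congrArg Prod.snd (huniq (a, z) ⟨hz, rfl⟩)⟩
  · rintro ⟨hmem, huniq⟩
    refine ⟨⟨hmem, rfl⟩, ?_⟩
    rintro ⟨_, z⟩ ⟨hz, rfl⟩
    exact congrArg _ (huniq z hz)

theorem inter_snd_eq_singleton_iff :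
    R ∩ {p | p.2 = b} = {(a, b)} ↔ (a, b) ∈ R ∧ ∀ z, (z, b) ∈ R → z = a := by
  rw [Set.eq_singleton_iff_unique_mem]
  constructor
  · exact fun ⟨hmem, huniq⟩ => ⟨hmem.1, fun z hz => congrArg Prod.fst (huniq (z, b) ⟨hz, rfl⟩)⟩
  · rintro ⟨hmem, huniq⟩
    refine ⟨⟨hmem, rfl⟩, ?_⟩
    rintro ⟨z, _⟩ ⟨hz, rfl⟩
    exact congrArg (·, _) (huniq z hz)

theorem inter_fst_eq_empty_iff : R ∩ {p | p.1 = a} = ∅ ↔ ∀ z, (a, z) ∉ R := by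
  rw [Set.eq_empty_iff_forall_notMem]
  exact ⟨fun h z hz => h (a, z) ⟨hz, rfl⟩, by rintro h ⟨_, z⟩ ⟨hz, rfl⟩; exact h z hz⟩

theorem inter_snd_eq_empty_iff : R ∩ {p | p.2 = b} = ∅ ↔ ∀ z, (z, b) ∉ R := by
  rw [Set.eq_empty_iff_forall_notMem]
  exact ⟨fun h z hz => h (z, b) ⟨hz, rfl⟩, by rintro h ⟨z, _⟩ ⟨hz, rfl⟩; exact h z hz⟩

end Slices

namespace Implicational

variable {α : Type} {R : Set (α × α)} {b c x y z : α}

theorem right_unique_of_notMem (hR : Implicational R) (hbc : (b, c) ∉ R) (hxc : (x, c) ∈ R)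
    (hby : (b, y) ∈ R) (hbz : (b, z) ∈ R) : z = y := by
  rcases hR with ⟨B, C, rfl⟩ | ⟨B, f, -, rfl⟩ | ⟨B, C, p, q, -, hq, rfl⟩
  · exact absurd ⟨hby.1, hxc.2⟩ hbc
  · exact hbz.2.trans hby.2.symm
  · simp only [Set.mem_union, Set.mem_prod, Set.mem_singleton_iff] at hbc hxc hby hbz
    have hbp : b ≠ p := fun h => hbc (.inl ⟨h, hxc.elim (·.2) (·.2 ▸ hq)⟩)
    have hyq : y = q := (hby.resolve_left (hbp ·.1)).2
    have hzq : z = q := (hbz.resolve_left (hbp ·.1)).2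
    exact hzq.trans hyq.symm

theorem left_unique_of_notMem (hR : Implicational R) (hbc : (b, c) ∉ R) (hby : (b, y) ∈ R)
    (hxc : (x, c) ∈ R) (hzc : (z, c) ∈ R) : z = x := by
  rcases hR with ⟨B, C, rfl⟩ | ⟨B, f, hf, rfl⟩ | ⟨B, C, p, q, hp, -, rfl⟩
  · exact absurd ⟨hby.1, hxc.2⟩ hbc
  · exact hf hzc.1 hxc.1 (hzc.2.symm.trans hxc.2)
  · simp only [Set.mem_union, Set.mem_prod, Set.mem_singleton_iff] at hbc hby hxc hzc
    have hcq : c ≠ q := fun h => hbc (.inr ⟨hby.elim (·.1 ▸ hp) (·.1), h⟩)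
    have hxp : x = p := (hxc.resolve_right (hcq ·.2)).1
    have hzp : z = p := (hzc.resolve_right (hcq ·.2)).1
    exact hzp.trans hxp.symm

end Implicational

section ConflictGraph

variable {σ : Type} {A B : BinStruct σ} {a a' : A.carrier} {b b' : B.carrier}

theorem conflictEdge_inl_inl_iff :
    ConflictEdge A B (Sum.inl (a, b)) (Sum.inl (a', b')) ↔
      ∃ s, ((a, a') ∈ A.rel s ∧ (b, b') ∈ B.rel s ∧ ∀ z, (b, z) ∈ B.rel s → z = b') ∨
        ((a', a) ∈ A.rel s ∧ (b', b) ∈ B.rel s ∧ ∀ z, (z, b) ∈ B.rel s → z = b') := by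
  simp only [ConflictEdge, inter_fst_eq_singleton_iff, inter_snd_eq_singleton_iff]
  grind

theorem conflictEdge_inl_inr_iff {u : Unit} :
    ConflictEdge A B (Sum.inl (a, b)) (Sum.inr u) ↔
      ∃ s a', ((a, a') ∈ A.rel s ∧ ∀ z, (b, z) ∉ B.rel s) ∨
        ((a', a) ∈ A.rel s ∧ ∀ z, (z, b) ∉ B.rel s) := by
  simp only [ConflictEdge, inter_fst_eq_empty_iff, inter_snd_eq_empty_iff]
  grind

theorem not_conflictEdge_inr {u : Unit} {y : A.carrier × B.carrier ⊕ Unit} :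
    ¬ ConflictEdge A B (Sum.inr u) y := by
  simp [ConflictEdge]

end ConflictGraph

namespace BinStruct

variable {σ : Type} {A B : BinStruct σ} {a a' : A.carrier} {b b' c : B.carrier}
  {x y : A.carrier × B.carrier ⊕ Unit} {S T : Set (A.carrier × B.carrier ⊕ Unit)}

/-- The node `x` of the conflict graph refutes the assignment `a ↦ b`: some directed path leads from
`x` to `□` or to a node `(a, d)` with `d ≠ b`. -/
def Refutes (A B : BinStruct σ) (x : A.carrier × B.carrier ⊕ Unit) (a : A.carrier)
    (b : B.carrier) : Prop :=
  ReflTransGen (ConflictEdge A B) x (Sum.inr ()) ∨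
    ∃ d ≠ b, ReflTransGen (ConflictEdge A B) x (Sum.inl (a, d))

theorem not_refutes_iff :
    ¬ Refutes A B x a b ↔
      (∀ d ≠ b, ¬ ReflTransGen (ConflictEdge A B) x (Sum.inl (a, d))) ∧
        ¬ ReflTransGen (ConflictEdge A B) x (Sum.inr ()) := by
  simp only [Refutes, not_or, not_exists, not_and]
  exact and_comm

theorem Refutes.of_reflTransGen (hxy : ReflTransGen (ConflictEdge A B) x y)
    (hy : Refutes A B y a b) : Refutes A B x a b :=
  hy.imp hxy.trans fun ⟨d, hd, hpath⟩ => ⟨d, hd, hxy.trans hpath⟩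

theorem refutes_of_conflictEdge (himp : ∀ s, Implicational (B.rel s))
    (hedge : ConflictEdge A B (Sum.inl (a, b)) (Sum.inl (a', b'))) (hc : c ≠ b') :
    Refutes A B (Sum.inl (a', c)) a b := by
  obtain ⟨s, ⟨hA, hB, huniq⟩ | ⟨hA, hB, huniq⟩⟩ := conflictEdge_inl_inl_iff.1 hedge
  · have hbc : (b, c) ∉ B.rel s := fun h => hc (huniq c h)
    by_cases hcol : ∃ d, (d, c) ∈ B.rel s
    · obtain ⟨d, hd⟩ := hcol
      exact .inr ⟨d, ne_of_mem_of_not_mem (s := {z | (z, c) ∈ B.rel s}) hd hbc,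
        .single <| conflictEdge_inl_inl_iff.2
          ⟨s, .inr ⟨hA, hd, fun _ => (himp s).left_unique_of_notMem hbc hB hd⟩⟩⟩
    · exact .inl <| .single <| conflictEdge_inl_inr_iff.2 ⟨s, a, .inr ⟨hA, not_exists.1 hcol⟩⟩
  · have hcb : (c, b) ∉ B.rel s := fun h => hc (huniq c h)
    by_cases hrow : ∃ d, (c, d) ∈ B.rel s
    · obtain ⟨d, hd⟩ := hrow
      exact .inr ⟨d, ne_of_mem_of_not_mem (s := {z | (c, z) ∈ B.rel s}) hd hcb,
        .single <| conflictEdge_inl_inl_iff.2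
          ⟨s, .inl ⟨hA, hd, fun _ => (himp s).right_unique_of_notMem hcb hB hd⟩⟩⟩
    · exact .inl <| .single <| conflictEdge_inl_inr_iff.2 ⟨s, a, .inl ⟨hA, not_exists.1 hrow⟩⟩

theorem refutes_of_reflTransGen (himp : ∀ s, Implicational (B.rel s))
    (hpath : ReflTransGen (ConflictEdge A B) (Sum.inl (a, b)) (Sum.inl (a', b'))) (hc : c ≠ b') :
    Refutes A B (Sum.inl (a', c)) a b := by
  generalize hz : Sum.inl (a', b') = z at hpath
  induction hpath generalizing a' b' c with
  | refl =>
    cases hz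
    exact .inr ⟨c, hc, .refl⟩
  | @tail y _ _ hedge ih =>
    subst hz
    rcases y with ⟨a₁, b₁⟩ | u
    · rcases refutes_of_conflictEdge himp hedge hc with hbox | ⟨d, hd, hpath⟩
      · exact .inl hbox
      · exact .of_reflTransGen hpath (ih hd rfl)
    · exact absurd hedge not_conflictEdge_inr

/-- A set of nodes of the conflict graph that is closed under arcs, avoids `□` and contains at most
one node over each element of `A`. Such a set is the graph of a partial map from `A` to `B` whose
forced consequences raise no conflict. -/
structure IsConsistent (A B : BinStruct σ) (T : Set (A.carrier × B.carrier ⊕ Unit)) : Prop where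
  mem_of_conflictEdge {x y : A.carrier × B.carrier ⊕ Unit} : x ∈ T → ConflictEdge A B x y → y ∈ T
  inr_notMem : Sum.inr () ∉ T
  unique {a : A.carrier} {b b' : B.carrier} : Sum.inl (a, b) ∈ T → Sum.inl (a, b') ∈ T → b = b'

namespace IsConsistent

theorem mem_of_reflTransGen (hT : IsConsistent A B T) (hx : x ∈ T)
    (hxy : ReflTransGen (ConflictEdge A B) x y) : y ∈ T := by
  induction hxy with
  | refl => exact hx
  | tail _ hedge ih => exact hT.mem_of_conflictEdge ih hedge

theorem exists_mem_of_refutes (hT : IsConsistent A B T) (hx : x ∈ T) (hab : Refutes A B x a b) :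
    ∃ d ≠ b, Sum.inl (a, d) ∈ T := by
  rcases hab with hbox | ⟨d, hd, hpath⟩
  · exact absurd (hT.mem_of_reflTransGen hx hbox) hT.inr_notMem
  · exact ⟨d, hd, hT.mem_of_reflTransGen hx hpath⟩

theorem not_refutes (hT : IsConsistent A B T) (hab : Sum.inl (a, b) ∈ T) :
    ¬ Refutes A B (Sum.inl (a, b)) a b := fun hrefutes =>
  have ⟨_, hd, had⟩ := hT.exists_mem_of_refutes hab hrefutes
  hd (hT.unique had hab)

theorem union (hS : IsConsistent A B S) (hT : IsConsistent A B T)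
    (hST : ∀ {a b b'}, Sum.inl (a, b) ∈ S → Sum.inl (a, b') ∈ T → b = b') :
    IsConsistent A B (S ∪ T) where
  mem_of_conflictEdge hx hedge :=
    hx.imp (hS.mem_of_conflictEdge · hedge) (hT.mem_of_conflictEdge · hedge)
  inr_notMem := fun h => h.elim hS.inr_notMem hT.inr_notMem
  unique := by
    rintro a b b' (hb | hb) (hb' | hb')
    · exact hS.unique hb hb'
    · exact hST hb hb'
    · exact (hST hb' hb).symm
    · exact hT.unique hb hb'

theorem sUnion {C : Set (Set (A.carrier × B.carrier ⊕ Unit))} (hC : ∀ T ∈ C, IsConsistent A B T)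
    (hchain : IsChain (· ⊆ ·) C) : IsConsistent A B (⋃₀ C) where
  mem_of_conflictEdge := fun ⟨T, hT, hx⟩ hedge => ⟨T, hT, (hC T hT).mem_of_conflictEdge hx hedge⟩
  inr_notMem := fun ⟨T, hT, h⟩ => (hC T hT).inr_notMem h
  unique := by
    rintro a b b' ⟨S, hS, hb⟩ ⟨T, hT, hb'⟩
    rcases hchain.total hS hT with hST | hTS
    · exact (hC T hT).unique (hST hb) hb'
    · exact (hC S hS).unique hb (hTS hb')

theorem mem_rel (himp : ∀ s, Implicational (B.rel s)) (hT : IsConsistent A B T)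
    (hb : Sum.inl (a, b) ∈ T) (hb' : Sum.inl (a', b') ∈ T) {s : σ} (hA : (a, a') ∈ A.rel s) :
    (b, b') ∈ B.rel s := by
  obtain ⟨y, hby⟩ : ∃ y, (b, y) ∈ B.rel s := by
    by_contra hrow
    exact hT.inr_notMem <| hT.mem_of_conflictEdge hb <|
      conflictEdge_inl_inr_iff.2 ⟨s, a', .inl ⟨hA, not_exists.1 hrow⟩⟩
  obtain ⟨x, hxb'⟩ : ∃ x, (x, b') ∈ B.rel s := by
    by_contra hcol
    exact hT.inr_notMem <| hT.mem_of_conflictEdge hb' <|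
      conflictEdge_inl_inr_iff.2 ⟨s, a, .inr ⟨hA, not_exists.1 hcol⟩⟩
  by_contra hbb'
  have hedge : ConflictEdge A B (Sum.inl (a, b)) (Sum.inl (a', y)) := conflictEdge_inl_inl_iff.2
    ⟨s, .inl ⟨hA, hby, fun _ => (himp s).right_unique_of_notMem hbb' hxb' hby⟩⟩
  have hy : y = b' := hT.unique (hT.mem_of_conflictEdge hb hedge) hb'
  exact hbb' (hy ▸ hby)

end IsConsistent

theorem IsHom.isConsistent_range {h : A.carrier → B.carrier} (hh : IsHom A B h) :
    IsConsistent A B (Set.range fun a => Sum.inl (a, h a)) where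
  mem_of_conflictEdge := by
    rintro _ (⟨a', b'⟩ | u) ⟨a, rfl⟩ hedge
    · suffices heq : h a' = b' from ⟨a', by simp only [heq]⟩
      obtain ⟨s, ⟨hA, -, huniq⟩ | ⟨hA, -, huniq⟩⟩ := conflictEdge_inl_inl_iff.1 hedge
      · exact huniq _ (hh s _ hA)
      · exact huniq _ (hh s _ hA)
    · obtain ⟨s, a', ⟨hA, hempty⟩ | ⟨hA, hempty⟩⟩ := conflictEdge_inl_inr_iff.1 hedge
      · exact absurd (hh s _ hA) (hempty _)
      · exact absurd (hh s _ hA) (hempty _)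
  inr_notMem := by simp
  unique := by
    rintro a b b' ⟨_, ⟨⟩⟩ ⟨_, ⟨⟩⟩
    rfl

theorem isConsistent_reachable (himp : ∀ s, Implicational (B.rel s))
    (hab : ¬ Refutes A B (Sum.inl (a, b)) a b) :
    IsConsistent A B {y | ReflTransGen (ConflictEdge A B) (Sum.inl (a, b)) y} where
  mem_of_conflictEdge := ReflTransGen.tail
  inr_notMem := (not_refutes_iff.1 hab).2
  unique hc hc' := by
    by_contra hne
    exact hab (.of_reflTransGen hc (refutes_of_reflTransGen himp hc' hne))

theorem IsConsistent.union_reachable (himp : ∀ s, Implicational (B.rel s))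
    (hT : IsConsistent A B T) (ha : ∀ d, Sum.inl (a, d) ∉ T)
    (hab : ¬ Refutes A B (Sum.inl (a, b)) a b) :
    IsConsistent A B (T ∪ {y | ReflTransGen (ConflictEdge A B) (Sum.inl (a, b)) y}) := by
  refine hT.union (isConsistent_reachable himp hab) fun {a' c c'} hc hc' => ?_
  by_contra hne
  have hrefutes : Refutes A B (Sum.inl (a', c)) a b := refutes_of_reflTransGen himp hc' hne
  obtain ⟨d, -, hd⟩ := hT.exists_mem_of_refutes hc hrefutes
  exact ha d hd

theorem exists_isConsistent_total (himp : ∀ s, Implicational (B.rel s))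
    (hloc : ∀ a, ∃ b, ¬ Refutes A B (Sum.inl (a, b)) a b) :
    ∃ T, IsConsistent A B T ∧ ∀ a, ∃ b, Sum.inl (a, b) ∈ T := by
  obtain ⟨T, hT⟩ := zorn_subset {T | IsConsistent A B T} fun C hC hchain =>
    ⟨⋃₀ C, IsConsistent.sUnion hC hchain, fun _ => Set.subset_sUnion_of_mem⟩
  refine ⟨T, hT.prop, fun a => ?_⟩
  by_contra! ha
  obtain ⟨b, hab⟩ := hloc a
  have hsub := hT.le_of_ge (hT.prop.union_reachable himp ha hab) Set.subset_union_left
  exact ha b (hsub (.inr .refl))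

theorem homTo_iff_exists_isConsistent_total (himp : ∀ s, Implicational (B.rel s)) :
    HomTo A B ↔ ∃ T, IsConsistent A B T ∧ ∀ a, ∃ b, Sum.inl (a, b) ∈ T := by
  constructor
  · rintro ⟨h, hh⟩
    exact ⟨_, hh.isConsistent_range, fun a => ⟨h a, a, rfl⟩⟩
  · rintro ⟨T, hT, htotal⟩
    choose h hmem using htotal
    exact ⟨h, fun s p hp => hT.mem_rel himp (hmem p.1) (hmem p.2) hp⟩

end BinStruct

theorem stmt9_general {σ : Type} (A B : BinStruct σ) (himp : ∀ s, Implicational (B.rel s)) :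
    BinStruct.HomTo A B ↔
      ∀ a : A.carrier, ∃ b : B.carrier,
        (∀ b' : B.carrier, b' ≠ b →
          ¬ Relation.ReflTransGen (ConflictEdge A B)
              (Sum.inl (a, b)) (Sum.inl (a, b'))) ∧
        ¬ Relation.ReflTransGen (ConflictEdge A B)
            (Sum.inl (a, b)) (Sum.inr ()) := by
  simp only [← BinStruct.not_refutes_iff]
  rw [BinStruct.homTo_iff_exists_isConsistent_total himp]
  constructor
  · rintro ⟨T, hT, htotal⟩ a
    exact (htotal a).imp fun _ => hT.not_refutes
  · exact BinStruct.exists_isConsistent_total himp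

/-- `A` maps homomorphically to the implicational structure `B`
iff for every `a ∈ A` there is some `b ∈ B` such that in the conflict graph
there is no directed path from `(a,b)` to any node `(a,b')` with `b' ≠ b` nor
to `□`. -/
theorem stmt9 {σ : Type} [Finite σ] (A B : BinStruct σ)
    (hAfin : Finite A.carrier) (hBfin : Finite B.carrier)
    (himp : ∀ s, Implicational (B.rel s)) :
    BinStruct.HomTo A B ↔
      ∀ a : A.carrier, ∃ b : B.carrier,
        (∀ b' : B.carrier, b' ≠ b →
          ¬ Relation.ReflTransGen (ConflictEdge A B)
              (Sum.inl (a, b)) (Sum.inl (a, b'))) ∧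
        ¬ Relation.ReflTransGen (ConflictEdge A B)
            (Sum.inl (a, b)) (Sum.inr ()) :=
  stmt9_general A B himp
end

section
/- Let k ≥ 2 and let B be a finite τ-structure with universe {0,1} all of whose relations are in k-IHS-B+. Then B has (k, k−1+ρ(B))-path duality, where ρ(B) denotes the maximum arity of a relation symbol of τ: for every finite τ-structure A that does not homomorphically map to B, there exists a finite τ-structure P of pathwidth at most (k, k−1+ρ(B)) such that P homomorphically maps to A but not to B. Similarly, if all relations of B are in k-IHS-B−, then B has (k, k−1+ρ(B))-path duality. -/
/-- Clauses allowed in a `k`-IHS-B+ CNF over variables `x_1,…,x_r`: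
`¬x_i`, `¬x_i ∨ x_j`, or `x_{i_1} ∨ … ∨ x_{i_k}`. -/
inductive IHSPClause (r k : ℕ) where
  | negUnit (i : Fin r)
  | impl (i j : Fin r)
  | posK (w : Fin k → Fin r)

def IHSPClause.Holds {r k : ℕ} (t : Fin r → Bool) : IHSPClause r k → Prop
  | .negUnit i => t i = false
  | .impl i j => t i = false ∨ t j = true
  | .posK w => ∃ m, t (w m) = true

/-- Clauses allowed in a `k`-IHS-B− CNF over variables `x_1,…,x_r`:
`x_i`, `¬x_i ∨ x_j`, or `¬x_{i_1} ∨ … ∨ ¬x_{i_k}`. -/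
inductive IHSMClause (r k : ℕ) where
  | posUnit (i : Fin r)
  | impl (i j : Fin r)
  | negK (w : Fin k → Fin r)

def IHSMClause.Holds {r k : ℕ} (t : Fin r → Bool) : IHSMClause r k → Prop
  | .posUnit i => t i = true
  | .impl i j => t i = false ∨ t j = true
  | .negK w => ∃ m, t (w m) = false

/-- A Boolean relation is in `k`-IHS-B+. -/
def IsIHSBPlus (k : ℕ) {r : ℕ} (R : Set (Fin r → Bool)) : Prop :=
  ∃ cs : List (IHSPClause r k), R = {t | ∀ c ∈ cs, IHSPClause.Holds t c}

/-- A Boolean relation is in `k`-IHS-B−. -/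
def IsIHSBMinus (k : ℕ) {r : ℕ} (R : Set (Fin r → Bool)) : Prop :=
  ∃ cs : List (IHSMClause r k), R = {t | ∀ c ∈ cs, IHSMClause.Holds t c}

/-!
Let `b` be the value propagated by unit clauses and implications (`0` for IHS-B+, `1` for IHS-B−).
Sending the elements of `A` that are forced to take the value `b` to `b`, and all others to the
other value, is a homomorphism unless the positions of some `k`-clause are all forced in some tuple
of `A`.

In that case the derivations of these at most `k` forced elements are unfolded one after another
into a single path: while one derivation is processed, the at most `k - 1` elements already derived
are carried along. A bag thus consists of at most `k - 1` carried elements and one tuple of `A`,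
and consecutive bags share only the carried elements and the element currently propagated.
-/

namespace Struct

variable {σ : Type} {ar : σ → ℕ}

/-- The paper's `(j, w)`-path duality, except that `A` may be infinite. -/
def HasPathDuality (B : Struct σ ar) (j w : ℕ) : Prop :=
  ∀ A : Struct σ ar, ¬ HomTo A B →
    ∃ P : Struct σ ar, Finite P.carrier ∧ PathwidthLE P j w ∧ HomTo P A ∧ ¬ HomTo P B

section Adjoin

variable {P B : Struct σ ar} {N : Type} {s : σ} {t : Fin (ar s) → P.carrier ⊕ N}

/-- The relations of `Struct.adjoin`. -/
inductive AdjoinRel (P : Struct σ ar) {N : Type} {s : σ} (t : Fin (ar s) → P.carrier ⊕ N) :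
    ∀ r : σ, (Fin (ar r) → P.carrier ⊕ N) → Prop
  | old {r : σ} {y : Fin (ar r) → P.carrier} (hy : y ∈ P.rel r) : AdjoinRel P t r (Sum.inl ∘ y)
  | new : AdjoinRel P t s t

/-- The structure obtained from `P` by adding the elements of `N` and the single tuple `t`. -/
def adjoin (P : Struct σ ar) {N : Type} {s : σ} (t : Fin (ar s) → P.carrier ⊕ N) :
    Struct σ ar where
  carrier := P.carrier ⊕ N
  rel r := {x | AdjoinRel P t r x}

theorem isHom_adjoin_iff {g : P.carrier ⊕ N → B.carrier} :
    IsHom (P.adjoin t) B g ↔ IsHom P B (g ∘ Sum.inl) ∧ g ∘ t ∈ B.rel s := by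
  refine ⟨fun hg => ⟨fun r y hy => hg r _ (.old hy), hg s t .new⟩, ?_⟩
  rintro ⟨hP, ht⟩ r x hx
  cases hx with
  | old hy => exact hP r _ hy
  | new => exact ht

/-- The bags `S` preceded by a bag consisting of `K` and all elements of `N`. -/
def prependBag {α N : Type} {n : ℕ} (K : Set α) (S : Fin n → Set α) : Fin (n + 1) → Set (α ⊕ N) :=
  Fin.cons (Sum.inl '' K ∪ Set.range Sum.inr) fun i => Sum.inl '' S i

section PrependBag

variable {α : Type} {n : ℕ} {K : Set α} {S : Fin n → Set α}

theorem inl_mem_prependBag_zero {x : α} : .inl x ∈ prependBag (N := N) K S 0 ↔ x ∈ K := by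
  simp [prependBag]

theorem inl_mem_prependBag_succ {i : Fin n} {x : α} :
    .inl x ∈ prependBag (N := N) K S i.succ ↔ x ∈ S i := by
  simp [prependBag]

theorem ncard_prependBag_zero_le [Finite N] :
    (prependBag (N := N) K S 0).ncard ≤ K.ncard + Nat.card N :=
  (Set.ncard_union_le _ _).trans <| add_le_add
    (Set.ncard_image_of_injective K Sum.inl_injective).le (Finite.card_range_le _)

theorem ncard_prependBag_zero_inter_succ_le (hK : K.Finite) (i : Fin n) :
    (prependBag (N := N) K S 0 ∩ prependBag K S i.succ).ncard ≤ K.ncard := by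
  have hsub : prependBag (N := N) K S 0 ∩ prependBag K S i.succ ⊆ Sum.inl '' K := by
    rintro _ ⟨hx, x, -, rfl⟩
    exact ⟨x, inl_mem_prependBag_zero.1 hx, rfl⟩
  exact (Set.ncard_le_ncard hsub (hK.image _)).trans (Set.ncard_image_le hK)

theorem ncard_prependBag_succ_inter_succ (i i' : Fin n) :
    (prependBag (N := N) K S i.succ ∩ prependBag K S i'.succ).ncard = (S i ∩ S i').ncard := by
  simp only [prependBag, Fin.cons_succ]
  rw [← Set.image_inter Sum.inl_injective, Set.ncard_image_of_injective _ Sum.inl_injective]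

end PrependBag

variable {n : ℕ} {K : Set P.carrier} {S : Fin (n + 1) → Set P.carrier}

theorem isPathDecomp_adjoin (hS : IsPathDecomp P S) (hK : K ⊆ S 0)
    (ht : ∀ l, t l ∈ prependBag K S 0) : IsPathDecomp (P.adjoin t) (prependBag K S) := by
  constructor
  · intro r x hx
    cases hx with
    | old hy =>
      obtain ⟨i, hi⟩ := hS.1 r _ hy
      exact ⟨i.succ, fun m => inl_mem_prependBag_succ.2 (hi m)⟩
    | new => exact ⟨0, ht⟩
  · intro a i l q hil hlq hai haq
    cases l using Fin.cases with
    | zero => rwa [Fin.le_zero_iff.1 hil] at hai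
    | succ l =>
      cases q using Fin.cases with
      | zero => exact absurd hlq (Fin.succ_pos l).not_ge
      | succ q =>
        obtain ⟨x, hxq, rfl⟩ := haq
        have hlq' : l ≤ q := Fin.succ_le_succ_iff.1 hlq
        refine Set.mem_image_of_mem _ ?_
        cases i using Fin.cases with
        | zero =>
          have hxK : x ∈ K := inl_mem_prependBag_zero.1 hai
          exact hS.2 x 0 l q (Fin.zero_le _) hlq' (hK hxK) hxq
        | succ i =>
          have hxi : x ∈ S i := inl_mem_prependBag_succ.1 hai
          exact hS.2 x i l q (Fin.succ_le_succ_iff.1 hil) hlq' hxi hxq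

theorem decompWidthLE_adjoin [Finite N] {j w : ℕ} (hS : DecompWidthLE S j w) (hK : K.Finite)
    (hKj : K.ncard ≤ j) (hKw : K.ncard + Nat.card N ≤ w) :
    DecompWidthLE (A := P.adjoin t) (prependBag K S) j w := by
  refine ⟨fun i => ?_, fun i hi => ?_⟩
  · cases i using Fin.cases with
    | zero =>
      exact ⟨(hK.image _).union (Set.finite_range _), ncard_prependBag_zero_le.trans hKw⟩
    | succ i => exact ⟨(hS.1 i).1.image _, (Set.ncard_image_le (hS.1 i).1).trans (hS.1 i).2⟩
  · cases i using Fin.cases with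
    | zero => exact (ncard_prependBag_zero_inter_succ_le hK 0).trans hKj
    | succ i =>
      have hi' : (i : ℕ) + 1 < n + 1 := Nat.lt_of_succ_lt_succ hi
      exact (ncard_prependBag_succ_inter_succ i ⟨i + 1, hi'⟩).trans_le (hS.2 i hi')

end Adjoin

section RootedPath

variable {A B : Struct σ ar} {j w : ℕ} {ι κ : Type}

/-- A finite structure with a path-decomposition of width at most `(j, w)`, mapping to `A`, whose
first bag contains marked elements that lie above the family `v` of elements of `A`. -/
structure RootedPath (A : Struct σ ar) (j w : ℕ) {ι : Type} (v : ι → A.carrier) where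
  source : Struct σ ar
  finite : Finite source.carrier
  len : ℕ
  bag : Fin (len + 1) → Set source.carrier
  isPathDecomp : IsPathDecomp source bag
  widthLE : DecompWidthLE bag j w
  map : source.carrier → A.carrier
  isHom : IsHom source A map
  root : ι → source.carrier
  root_mem : ∀ i, root i ∈ bag 0
  map_root : ∀ i, map (root i) = v i

namespace RootedPath

/-- The rooted path on the empty structure. -/
def nil [IsEmpty ι] (v : ι → A.carrier) : RootedPath A j w v where
  source := ⟨Empty, fun _ => ∅⟩
  finite := inferInstanceAs (Finite Empty)
  len := 0
  bag := fun _ => ∅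
  isPathDecomp := ⟨fun _ _ ht => ht.elim, fun a => a.elim⟩
  widthLE := ⟨fun _ => by simp, fun _ _ => by simp⟩
  map := Empty.elim
  isHom := fun _ _ ht => ht.elim
  root := isEmptyElim
  root_mem := isEmptyElim
  map_root := isEmptyElim

/-- The same path with roots pulled back along `f`. -/
def comap {v : ι → A.carrier} (X : RootedPath A j w v) (f : κ → ι) :
    RootedPath A j w (v ∘ f) where
  __ := X
  root := X.root ∘ f
  root_mem := fun i => X.root_mem (f i)
  map_root := fun i => X.map_root (f i)

open Classical in
/-- A tuple with entries prescribed by `q` on the positions in `G` and fresh entries elsewhere. -/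
noncomputable def gluedTuple {α β : Type} {G : Set α} (q : G → β) (l : α) : β ⊕ ↥Gᶜ :=
  Sum.map q id ((Equiv.Set.sumCompl G).symm l)

theorem gluedTuple_of_mem {α β : Type} {G : Set α} (q : G → β) (l : G) :
    gluedTuple q l = Sum.inl (q l) := by
  simp [gluedTuple]

theorem gluedTuple_of_notMem {α β : Type} {G : Set α} (q : G → β) (l : ↥Gᶜ) :
    gluedTuple q l = Sum.inr l := by
  simp [gluedTuple]

/-- Prepend to the path a bag consisting of the old roots and a copy of the tuple `t` of `A`; the
positions of `t` in `G` are identified with old roots via `e`. -/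
noncomputable def glue [Finite ι] {v : ι → A.carrier} (X : RootedPath A j w v) {s : σ}
    {t : Fin (ar s) → A.carrier} (ht : t ∈ A.rel s) {G : Set (Fin (ar s))} (e : G → ι)
    (he : ∀ l : G, v (e l) = t l) (hj : Nat.card ι ≤ j) (hw : Nat.card ι + Gᶜ.ncard ≤ w) :
    RootedPath A j w (Sum.elim v t) :=
  have := X.finite
  have glued_mem (l : Fin (ar s)) :
      gluedTuple (X.root ∘ e) l ∈ prependBag (Set.range X.root) X.bag 0 := by
    by_cases hl : l ∈ G
    · exact Or.inl ⟨X.root (e ⟨l, hl⟩), ⟨_, rfl⟩, (gluedTuple_of_mem (X.root ∘ e) ⟨l, hl⟩).symm⟩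
    · exact Or.inr ⟨⟨l, hl⟩, (gluedTuple_of_notMem _ ⟨l, hl⟩).symm⟩
  have map_glued (l : Fin (ar s)) :
      Sum.elim X.map (fun l : ↥Gᶜ => t l) (gluedTuple (X.root ∘ e) l) = t l := by
    by_cases hl : l ∈ G
    · exact (congrArg _ (gluedTuple_of_mem _ ⟨l, hl⟩)).trans
        ((X.map_root _).trans (he ⟨l, hl⟩))
    · exact congrArg _ (gluedTuple_of_notMem _ ⟨l, hl⟩)
  have card_roots : (Set.range X.root).ncard ≤ Nat.card ι := Finite.card_range_le X.root
  { source := X.source.adjoin (gluedTuple (X.root ∘ e))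
    finite := inferInstanceAs (Finite (X.source.carrier ⊕ ↥Gᶜ))
    len := X.len + 1
    bag := prependBag (Set.range X.root) X.bag
    isPathDecomp :=
      isPathDecomp_adjoin X.isPathDecomp (Set.range_subset_iff.2 X.root_mem) glued_mem
    widthLE := decompWidthLE_adjoin X.widthLE (Set.finite_range _) (card_roots.trans hj)
      ((Nat.add_le_add_right card_roots _).trans hw)
    map := Sum.elim X.map fun l : ↥Gᶜ => t l
    isHom := isHom_adjoin_iff.2 ⟨X.isHom, by rwa [← funext map_glued] at ht⟩
    root := Sum.elim (Sum.inl ∘ X.root) (gluedTuple (X.root ∘ e))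
    root_mem := Sum.rec (fun i => Or.inl ⟨_, ⟨i, rfl⟩, rfl⟩) glued_mem
    map_root := Sum.rec X.map_root map_glued }

end RootedPath

/-- Some rooted path over `v` has the property that every homomorphism to `B` sends its roots to a
family in `R`; this plays the role of deriving the fact `R(v)` in linear Datalog. -/
def PathEntails (A B : Struct σ ar) (j w : ℕ) {ι : Type} (v : ι → A.carrier)
    (R : Set (ι → B.carrier)) : Prop :=
  ∃ X : RootedPath A j w v, ∀ g, IsHom X.source B g → g ∘ X.root ∈ R

namespace PathEntails

variable {v : ι → A.carrier} {R : Set (ι → B.carrier)}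

theorem nil [IsEmpty ι] (v : ι → A.carrier) : PathEntails A B j w v Set.univ :=
  ⟨.nil v, fun _ _ => Set.mem_univ _⟩

theorem comap (h : PathEntails A B j w v R) (f : κ → ι) {R' : Set (κ → B.carrier)}
    (hR : ∀ x ∈ R, x ∘ f ∈ R') : PathEntails A B j w (v ∘ f) R' :=
  let ⟨X, hX⟩ := h
  ⟨X.comap f, fun g hg => hR _ (hX g hg)⟩

theorem glue [Finite ι] (h : PathEntails A B j w v R) {s : σ} {t : Fin (ar s) → A.carrier}
    (ht : t ∈ A.rel s) {G : Set (Fin (ar s))} (e : G → ι) (he : ∀ l : G, v (e l) = t l)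
    (hj : Nat.card ι ≤ j) (hw : Nat.card ι + Gᶜ.ncard ≤ w) :
    PathEntails A B j w (Sum.elim v t)
      {z | z ∘ Sum.inl ∈ R ∧ z ∘ Sum.inr ∈ B.rel s ∧ ∀ l : G, z (.inr l) = z (.inl (e l))} := by
  obtain ⟨X, hX⟩ := h
  refine ⟨X.glue ht e he hj hw, fun g hg => ?_⟩
  obtain ⟨hgX, hgt⟩ := isHom_adjoin_iff.1 hg
  exact ⟨hX _ hgX, hgt, fun l => congrArg g (RootedPath.gluedTuple_of_mem _ l)⟩

theorem exists_not_homTo (h : PathEntails A B j w v ∅) :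
    ∃ P : Struct σ ar, Finite P.carrier ∧ PathwidthLE P j w ∧ HomTo P A ∧ ¬ HomTo P B :=
  let ⟨X, hX⟩ := h
  ⟨X.source, X.finite, ⟨_, X.bag, X.isPathDecomp, X.widthLE⟩, ⟨X.map, X.isHom⟩,
    fun ⟨g, hg⟩ => hX g hg⟩

end PathEntails

end RootedPath

end Struct

/-- The common form of `k`-IHS-B+ and `k`-IHS-B− formulas, relative to a value `b` that will be
propagated: `i ∈ unit` stands for `x i = b`, `impl i j` for `x i = b → x j = b`, and `u ∈ block`
for the clause stating that `x (u 1), …, x (u k)` are not all `b`. -/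
structure PropagationClauses (r k : ℕ) where
  unit : Set (Fin r)
  impl : Fin r → Fin r → Prop
  block : Set (Fin k → Fin r)

/-- The tuple `x` satisfies all clauses, with `b` as the propagated value. -/
structure PropagationClauses.Holds {r k : ℕ} {β : Type*} (c : PropagationClauses r k) (b : β)
    (x : Fin r → β) : Prop where
  unit : ∀ i ∈ c.unit, x i = b
  impl : ∀ i j, c.impl i j → x i = b → x j = b
  block : ∀ u ∈ c.block, ∃ m, x (u m) ≠ b

theorem IsIHSBPlus.exists_propagationClauses {r k : ℕ} {R : Set (Fin r → Bool)}
    (hR : IsIHSBPlus k R) : ∃ c : PropagationClauses r k, ∀ x, x ∈ R ↔ c.Holds false x := by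
  obtain ⟨cs, rfl⟩ := hR
  let c : PropagationClauses r k :=
    ⟨{i | .negUnit i ∈ cs}, fun i j => .impl j i ∈ cs, {u | .posK u ∈ cs}⟩
  refine ⟨c, fun x => ⟨fun hx => ⟨fun i hi => hx _ hi, fun i j hij hi => ?_, fun u hu => ?_⟩, ?_⟩⟩
  · simpa [IHSPClause.Holds, hi] using hx _ hij
  · simpa [IHSPClause.Holds] using hx _ hu
  · rintro ⟨hunit, himpl, hblock⟩ (i | ⟨i, j⟩ | u) hc
    · exact hunit i hc
    · have := himpl j i hc
      grind [IHSPClause.Holds]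
    · simpa [IHSPClause.Holds] using hblock u hc

theorem IsIHSBMinus.exists_propagationClauses {r k : ℕ} {R : Set (Fin r → Bool)}
    (hR : IsIHSBMinus k R) : ∃ c : PropagationClauses r k, ∀ x, x ∈ R ↔ c.Holds true x := by
  obtain ⟨cs, rfl⟩ := hR
  let c : PropagationClauses r k :=
    ⟨{i | .posUnit i ∈ cs}, fun i j => .impl i j ∈ cs, {u | .negK u ∈ cs}⟩
  refine ⟨c, fun x => ⟨fun hx => ⟨fun i hi => hx _ hi, fun i j hij hi => ?_, fun u hu => ?_⟩, ?_⟩⟩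
  · simpa [IHSMClause.Holds, hi] using hx _ hij
  · simpa [IHSMClause.Holds] using hx _ hu
  · rintro ⟨hunit, himpl, hblock⟩ (i | ⟨i, j⟩ | u) hc
    · exact hunit i hc
    · have := himpl i j hc
      grind [IHSMClause.Holds]
    · simpa [IHSMClause.Holds] using hblock u hc

namespace Struct

variable {σ : Type} {ar : σ → ℕ} {A B : Struct σ ar} {k w : ℕ}
  {c : ∀ s, PropagationClauses (ar s) k} {b : B.carrier}

/-- The elements of `A` that unit propagation forces to take the propagated value. -/
inductive Forced (A : Struct σ ar) (c : ∀ s, PropagationClauses (ar s) k) : A.carrier → Prop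
  | unit {s : σ} {t : Fin (ar s) → A.carrier} (ht : t ∈ A.rel s) {i : Fin (ar s)}
      (hi : i ∈ (c s).unit) : Forced A c (t i)
  | impl {s : σ} {t : Fin (ar s) → A.carrier} (ht : t ∈ A.rel s) {i j : Fin (ar s)}
      (hij : (c s).impl i j) (hi : Forced A c (t i)) : Forced A c (t j)

theorem homTo_of_forall_block_exists_not_forced [Nontrivial B.carrier]
    (hB : ∀ s x, (c s).Holds b x → x ∈ B.rel s)
    (hA : ∀ s, ∀ t ∈ A.rel s, ∀ u ∈ (c s).block, ∃ m, ¬ Forced A c (t (u m))) : HomTo A B := by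
  classical
  obtain ⟨d, hdb⟩ := exists_ne b
  have eq_b_iff (a : A.carrier) : (if Forced A c a then b else d) = b ↔ Forced A c a := by
    simp [hdb]
  refine ⟨fun a => if Forced A c a then b else d, fun s t ht => hB s _ ⟨?_, ?_, ?_⟩⟩
  · exact fun i hi => (eq_b_iff _).2 (.unit ht hi)
  · exact fun i j hij hi => (eq_b_iff _).2 (.impl ht hij ((eq_b_iff _).1 hi))
  · intro u hu
    obtain ⟨m, hm⟩ := hA s t ht u hu
    exact ⟨m, (eq_b_iff _).not.2 hm⟩

theorem PathEntails.option_of_forced (hB : ∀ s, ∀ x ∈ B.rel s, (c s).Holds b x)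
    (hw : ∀ s, k + ar s ≤ w + 1) {ι : Type} [Finite ι] (hι : Nat.card ι < k) {v : ι → A.carrier}
    (hv : PathEntails A B k w v {x | ∀ i, x i = b}) {a : A.carrier} (ha : Forced A c a) :
    PathEntails A B k w (fun o : Option ι => o.elim a v) {x | ∀ i, x i = b} := by
  induction ha with
  | @unit s t ht i hi =>
    have hcard : Nat.card ι + (∅ᶜ : Set (Fin (ar s))).ncard ≤ w := by
      have := hw s
      simp only [Set.compl_empty, Set.ncard_univ, Nat.card_fin]
      omega
    have hglue := hv.glue ht (G := ∅) (fun l => l.2.elim) (fun l => l.2.elim) hι.le hcard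
    convert hglue.comap (fun o : Option ι => o.elim (.inr i) .inl) ?_ using 1
    · ext (_ | x) <;> rfl
    · rintro z ⟨hz, hzB, -⟩ (_ | x)
      · exact (hB s _ hzB).unit i hi
      · exact hz x
  | @impl s t ht i j hij _ ih =>
    have hcard : Nat.card (Option ι) + ({i}ᶜ : Set (Fin (ar s))).ncard ≤ w := by
      have := hw s
      have := i.pos
      rw [Finite.card_option, Set.ncard_compl, Set.ncard_singleton, Nat.card_fin]
      omega
    have hglue := ih.glue ht (G := {i}) (fun _ => none) (fun l => congrArg t l.2.symm)
      (Finite.card_option.trans_le hι) hcard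
    convert hglue.comap (fun o : Option ι => o.elim (.inr j) (.inl ∘ some)) ?_ using 1
    · ext (_ | x) <;> rfl
    · rintro z ⟨hz, hzB, hzi⟩ (_ | x)
      · exact (hB s _ hzB).impl i j hij ((hzi ⟨i, rfl⟩).trans (hz none))
      · exact hz (some x)

theorem PathEntails.of_forall_forced (hB : ∀ s, ∀ x ∈ B.rel s, (c s).Holds b x)
    (hw : ∀ s, k + ar s ≤ w + 1) {ι : Type} [Finite ι] (hι : Nat.card ι ≤ k) (v : ι → A.carrier)
    (hv : ∀ i, Forced A c (v i)) : PathEntails A B k w v {x | ∀ i, x i = b} := by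
  induction ι using Finite.induction_empty_option with
  | of_equiv e ih =>
    have := ih (Nat.card_congr e ▸ hι) (v ∘ e) fun i => hv (e i)
    have := this.comap e.symm (R' := {x | ∀ i, x i = b}) fun x hx i => hx (e.symm i)
    simpa [Function.comp_assoc] using this
  | h_empty => exact (nil v).comap id fun _ _ i => i.elim
  | h_option ih =>
    rw [Finite.card_option] at hι
    have hsome := ih (Nat.le_of_succ_le hι) (v ∘ some) fun i => hv (some i)
    convert hsome.option_of_forced hB hw hι (hv none) using 1
    ext (_ | i) <;> rfl

theorem hasPathDuality_of_propagationClauses [Nontrivial B.carrier] (hk : 0 < k)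
    (hw : ∀ s, k + ar s ≤ w + 1) (hB : ∀ s x, x ∈ B.rel s ↔ (c s).Holds b x) :
    HasPathDuality B k w := by
  intro A hA
  obtain ⟨s, t, ht, u, hu, hforced⟩ :
      ∃ s, ∃ t ∈ A.rel s, ∃ u ∈ (c s).block, ∀ m, Forced A c (t (u m)) := by
    by_contra! hfree
    exact hA (homTo_of_forall_block_exists_not_forced (fun s x => (hB s x).2) hfree)
  have hroots : Nat.card (Set.range u) ≤ k := by simpa using Finite.card_range_le u
  have hforces : PathEntails A B k w (fun l : Set.range u => t l) {x | ∀ l, x l = b} :=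
    .of_forall_forced (fun s x => (hB s x).1) hw hroots _ (Set.forall_subtype_range_iff.2 hforced)
  have hcard : Nat.card (Set.range u) + (Set.range u)ᶜ.ncard ≤ w := by
    rw [Nat.card_coe_set_eq, Set.ncard_add_ncard_compl, Nat.card_fin]
    have := hw s
    omega
  have hglue := hforces.glue ht id (fun _ => rfl) hroots hcard
  refine (hglue.comap id ?_).exists_not_homTo
  rintro z ⟨hz, hzB, hzu⟩
  obtain ⟨m, hm⟩ := ((hB s _).1 hzB).block u hu
  exact hm ((hzu ⟨u m, m, rfl⟩).trans (hz _))

end Struct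

theorem stmt10_general {σ : Type} {ar : σ → ℕ} {k : ℕ} (hk : 0 < k)
    (Brel : ∀ s : σ, Set (Fin (ar s) → Bool)) {ρ : ℕ} (hub : ∀ s, ar s ≤ ρ)
    (hIHS : (∀ s, IsIHSBPlus k (Brel s)) ∨ (∀ s, IsIHSBMinus k (Brel s))) :
    Struct.HasPathDuality ⟨Bool, Brel⟩ k (k - 1 + ρ) := by
  have hwidth (s : σ) : k + ar s ≤ k - 1 + ρ + 1 := by
    have := hub s
    omega
  rcases hIHS with hplus | hminus
  · choose c hc using fun s => (hplus s).exists_propagationClauses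
    exact Struct.hasPathDuality_of_propagationClauses (B := ⟨Bool, Brel⟩) hk hwidth hc
  · choose c hc using fun s => (hminus s).exists_propagationClauses
    exact Struct.hasPathDuality_of_propagationClauses (B := ⟨Bool, Brel⟩) hk hwidth hc

/-- every structure `B` over `{0,1}` all of whose relations are in
`k`-IHS-B+ (or all in `k`-IHS-B−) has `(k, k−1+ρ(B))`-path duality, where
`ρ` is the maximum arity of the vocabulary. -/
theorem stmt10 {σ : Type} {ar : σ → ℕ} [Finite σ] (k : ℕ) (hk : 2 ≤ k)
    (Brel : ∀ s : σ, Set (Fin (ar s) → Bool))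
    (ρ : ℕ) (hub : ∀ s, ar s ≤ ρ) (hmax : ∃ s, ar s = ρ)
    (hIHS : (∀ s, IsIHSBPlus k (Brel s)) ∨ (∀ s, IsIHSBMinus k (Brel s))) :
    ∀ A : Struct σ ar, Finite A.carrier →
      ¬ Struct.HomTo A ⟨Bool, Brel⟩ →
        ∃ P : Struct σ ar, Finite P.carrier ∧
          Struct.PathwidthLE P k (k - 1 + ρ) ∧
          Struct.HomTo P A ∧ ¬ Struct.HomTo P ⟨Bool, Brel⟩ :=
  fun A _ => stmt10_general (by omega) Brel hub hIHS A
end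

section
/- Let k ≥ 2, let B be a finite τ-structure with universe {0,1} all of whose relations are in k-IHS-B+, and let A be a finite τ-structure that does not homomorphically map to B. Then there exist elements a^i_j ∈ A for 1 ≤ i ≤ k and 1 ≤ j ≤ l_i such that the partial mapping (a^1_1 → 0, …, a^k_1 → 0) is forbidden, for each i ∈ {1,…,k} the partial mapping (a^i_{l_i} → 1) is forbidden, and for each i ∈ {1,…,k} and each j ∈ {1,…,l_i−1} the partial mapping (a^i_j → 1, a^i_{j+1} → 0) is forbidden (all with respect to A and B). -/
/-- Projection `T_{|i_1,…,i_m}` of an `r`-ary relation along a (not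
necessarily injective) index map. -/
def projRel {α : Type} {r m : ℕ} (idx : Fin m → Fin r)
    (T : Set (Fin r → α)) : Set (Fin m → α) :=
  (fun t => fun p => t (idx p)) '' T

/-- The partial mapping `(a_1 → b_1, …, a_m → b_m)` is forbidden with respect to
the instance `A` and the Boolean template with relations `Brel`. -/
def Forbidden {σ : Type} {ar : σ → ℕ} (A : Struct σ ar)
    (Brel : ∀ s : σ, Set (Fin (ar s) → Bool)) {m : ℕ}
    (a : Fin m → A.carrier) (b : Fin m → Bool) : Prop :=
  ∃ (s : σ) (idx : Fin m → Fin (ar s)),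
    a ∈ projRel idx (A.rel s) ∧ b ∉ projRel idx (Brel s)

/-!
Call an element of `A` *forced to `0`* if it starts a chain of forbidden mappings `(x → 1, y → 0)`
ending in an element `z` with `(z → 1)` forbidden. Send the forced elements to `0` and all others
to `1`. Being forced propagates backwards along forbidden mappings `(x → 1, y → 0)`, so this map
respects every clause `¬x_i` and `¬x_i ∨ x_j` of the template; as it is not a homomorphism, it
violates some `x_{i_1} ∨ … ∨ x_{i_k}`, which is a forbidden mapping of `k` forced elements to `0`.
-/

theorem IsIHSBPlus.mem_of_forall_holds {r k : ℕ} {R : Set (Fin r → Bool)} {u : Fin r → Bool}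
    (hR : IsIHSBPlus k R)
    (hu : ∀ c : IHSPClause r k, (∀ v ∈ R, c.Holds v) → c.Holds u) : u ∈ R := by
  obtain ⟨cs, rfl⟩ := hR
  exact fun c hc => hu c fun v hv => hv c hc

section

variable {σ : Type} {ar : σ → ℕ} {A : Struct σ ar} {Brel : ∀ s : σ, Set (Fin (ar s) → Bool)}

section Clauses

variable {s : σ} {t : Fin (ar s) → A.carrier}

theorem forbidden_comp_of_forall_ne {m : ℕ} {idx : Fin m → Fin (ar s)} {b : Fin m → Bool}
    (ht : t ∈ A.rel s) (hb : ∀ u ∈ Brel s, u ∘ idx ≠ b) : Forbidden A Brel (t ∘ idx) b :=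
  ⟨s, idx, ⟨t, ht, rfl⟩, fun ⟨u, hu, hub⟩ => hb u hu hub⟩

theorem forbidden_true_of_forall_eq_false {i : Fin (ar s)} (ht : t ∈ A.rel s)
    (hi : ∀ u ∈ Brel s, u i = false) :
    Forbidden A Brel (fun _ : Fin 1 => t i) (fun _ => true) :=
  forbidden_comp_of_forall_ne (idx := fun _ => i) ht fun u hu hub =>
    Bool.false_ne_true ((hi u hu).symm.trans (congrFun hub 0))

theorem forbidden_true_false_of_forall_imp {i j : Fin (ar s)} (ht : t ∈ A.rel s)
    (hij : ∀ u ∈ Brel s, u i = false ∨ u j = true) :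
    Forbidden A Brel ![t i, t j] ![true, false] := by
  have hforb : Forbidden A Brel (t ∘ ![i, j]) ![true, false] := by
    refine forbidden_comp_of_forall_ne ht fun u hu hub => ?_
    have hi : u i = true := congrFun hub 0
    have hj : u j = false := congrFun hub 1
    simpa [hi, hj] using hij u hu
  rwa [← FinVec.map_eq] at hforb

theorem forbidden_false_of_forall_exists_eq_true {m : ℕ} {w : Fin m → Fin (ar s)}
    (ht : t ∈ A.rel s) (hw : ∀ u ∈ Brel s, ∃ p, u (w p) = true) :
    Forbidden A Brel (t ∘ w) (fun _ => false) := by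
  refine forbidden_comp_of_forall_ne ht fun u hu hub => ?_
  obtain ⟨p, hp⟩ := hw u hu
  exact Bool.false_ne_true ((congrFun hub p).symm.trans hp)

end Clauses

theorem isHom_of_forall_forbidden {k : ℕ} (hIHS : ∀ s, IsIHSBPlus k (Brel s))
    {h : A.carrier → Bool}
    (h_neg : ∀ x, Forbidden A Brel (fun _ : Fin 1 => x) (fun _ => true) → h x = false)
    (h_imp : ∀ x y, Forbidden A Brel ![x, y] ![true, false] → h x = false ∨ h y = true)
    (h_pos : ∀ a : Fin k → A.carrier,
      Forbidden A Brel a (fun _ => false) → ∃ i, h (a i) = true) :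
    Struct.IsHom A ⟨Bool, Brel⟩ h := by
  refine fun s t ht => (hIHS s).mem_of_forall_holds fun c hc => ?_
  cases c with
  | negUnit i => exact h_neg _ (forbidden_true_of_forall_eq_false ht hc)
  | impl i j => exact h_imp _ _ (forbidden_true_false_of_forall_imp ht hc)
  | posK w => exact h_pos _ (forbidden_false_of_forall_exists_eq_true ht hc)

variable (A Brel) in
/-- The implication graph of the instance: `x` is related to `y` if `(x → 1, y → 0)` is forbidden,
i.e. `y` must be mapped to `1` whenever `x` is. -/
def forbiddenArc : SetRel A.carrier A.carrier :=
  {(x, y) | Forbidden A Brel ![x, y] ![true, false]}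

variable (A Brel) in
/-- `x` is forced to `0`: some path of the implication graph leads from `x` to an element that
cannot be mapped to `1`. Paths are `RelSeries`, whose underlying functions on `Fin (length + 1)`
are the sequences `a^i_1, …, a^i_{l_i}` of the theorem, with `length = l_i - 1`. -/
def ForcedFalse (x : A.carrier) : Prop :=
  ∃ p : RelSeries (forbiddenArc A Brel),
    p.head = x ∧ Forbidden A Brel (fun _ : Fin 1 => p.last) (fun _ => true)

theorem ForcedFalse.of_forbidden_true {x : A.carrier}
    (hx : Forbidden A Brel (fun _ : Fin 1 => x) (fun _ => true)) : ForcedFalse A Brel x :=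
  ⟨RelSeries.singleton _ x, RelSeries.head_singleton x, hx⟩

theorem ForcedFalse.of_forbidden_true_false {x y : A.carrier} (hy : ForcedFalse A Brel y)
    (hxy : Forbidden A Brel ![x, y] ![true, false]) : ForcedFalse A Brel x := by
  obtain ⟨p, rfl, hp⟩ := hy
  exact ⟨p.cons x hxy, p.head_cons x hxy, by rwa [p.last_cons x hxy]⟩

theorem exists_forbidden_false_and_forall_forcedFalse {k : ℕ}
    (hIHS : ∀ s, IsIHSBPlus k (Brel s)) (hnohom : ¬ Struct.HomTo A ⟨Bool, Brel⟩) :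
    ∃ a : Fin k → A.carrier,
      Forbidden A Brel a (fun _ => false) ∧ ∀ i, ForcedFalse A Brel (a i) := by
  classical
  by_contra! hcon
  refine hnohom ⟨fun x => decide (¬ ForcedFalse A Brel x), isHom_of_forall_forbidden hIHS ?_ ?_ ?_⟩
  · intro x hx
    simpa using ForcedFalse.of_forbidden_true hx
  · intro x y hxy
    have hforced : ForcedFalse A Brel y → ForcedFalse A Brel x :=
      fun hy => hy.of_forbidden_true_false hxy
    simpa [or_iff_not_imp_right] using hforced
  · simpa using hcon

end

theorem stmt12_general {σ : Type} {ar : σ → ℕ} (k : ℕ)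
    (Brel : ∀ s : σ, Set (Fin (ar s) → Bool))
    (hIHS : ∀ s, IsIHSBPlus k (Brel s))
    (A : Struct σ ar)
    (hnohom : ¬ Struct.HomTo A ⟨Bool, Brel⟩) :
    ∃ (l : Fin k → ℕ) (a : ∀ i : Fin k, Fin (l i + 1) → A.carrier),
      Forbidden A Brel (fun i : Fin k => a i 0) (fun _ => false) ∧
      (∀ i : Fin k,
        Forbidden A Brel (fun _ : Fin 1 => a i (Fin.last (l i)))
          (fun _ : Fin 1 => true)) ∧
      (∀ i : Fin k, ∀ j : Fin (l i),
        Forbidden A Brel ![a i j.castSucc, a i j.succ] ![true, false]) := by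
  obtain ⟨a, ha, hforced⟩ := exists_forbidden_false_and_forall_forcedFalse hIHS hnohom
  choose p hhead hlast using hforced
  obtain rfl : (fun i => (p i).head) = a := funext hhead
  exact ⟨fun i => (p i).length, fun i => (p i).toFun, ha, hlast, fun i => (p i).step⟩

/-- if `B` is a `{0,1}`-structure all of whose relations are in
`k`-IHS-B+ and `A` does not homomorphically map to `B`, then there are chains
of elements of `A` witnessing the forbidden partial mappings guaranteed by
Lemma 5.5 of the paper. -/
theorem stmt12 {σ : Type} {ar : σ → ℕ} [Finite σ] (k : ℕ) (hk : 2 ≤ k)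
    (Brel : ∀ s : σ, Set (Fin (ar s) → Bool))
    (hIHS : ∀ s, IsIHSBPlus k (Brel s))
    (A : Struct σ ar) (hAfin : Finite A.carrier)
    (hnohom : ¬ Struct.HomTo A ⟨Bool, Brel⟩) :
    ∃ (l : Fin k → ℕ) (a : ∀ i : Fin k, Fin (l i + 1) → A.carrier),
      Forbidden A Brel (fun i : Fin k => a i 0) (fun _ => false) ∧
      (∀ i : Fin k,
        Forbidden A Brel (fun _ : Fin 1 => a i (Fin.last (l i)))
          (fun _ : Fin 1 => true)) ∧
      (∀ i : Fin k, ∀ j : Fin (l i),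
        Forbidden A Brel ![a i j.castSucc, a i j.succ] ![true, false]) :=
  stmt12_general k Brel hIHS A hnohom
end

section
/- Let 0 ≤ j ≤ k be non-negative integers. Every finite τ-structure P that has a path-decomposition of width at most (j,k) also has a canonical path-decomposition of width at most (j,k): a path-decomposition S_1,…,S_n such that S_n = ∅ and for every 1 ≤ i ≤ n−1 either S_i ⊆ S_{i+1} or S_{i+1} ⊆ S_i. -/
/-!
Insert the intersection `S_i ∩ S_{i+1}` between any two consecutive bags and append the empty bag:
`S_1, S_1 ∩ S_2, S_2, S_2 ∩ S_3, …, S_n, ∅`. Each inserted bag is contained in both of its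
neighbours, and two consecutive bags of the new sequence meet in some `S_i ∩ S_{i+1}`, so the width
does not grow.
-/

section InterleaveInter

variable {α : Type*} {B : ℕ → Set α}

/-- The sequence `B 0, B 0 ∩ B 1, B 1, B 1 ∩ B 2, …` obtained from a sequence of sets by inserting
the intersections of consecutive terms. Even positions carry the original terms, since there
`m / 2 = (m + 1) / 2`. -/
def interleaveInter (B : ℕ → Set α) (m : ℕ) : Set α :=
  B (m / 2) ∩ B ((m + 1) / 2)

theorem interleaveInter_two_mul (B : ℕ → Set α) (m : ℕ) : interleaveInter B (2 * m) = B m := by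
  have half_succ : (2 * m + 1) / 2 = m := by omega
  rw [interleaveInter, half_succ, Nat.mul_div_cancel_left m two_pos, Set.inter_self]

theorem interleaveInter_two_mul_add_one (B : ℕ → Set α) (m : ℕ) :
    interleaveInter B (2 * m + 1) = B m ∩ B (m + 1) := by
  have half : (2 * m + 1) / 2 = m := by omega
  have half_succ : (2 * m + 1 + 1) / 2 = m + 1 := by omega
  rw [interleaveInter, half, half_succ]

theorem interleaveInter_subset_or_superset (B : ℕ → Set α) (m : ℕ) :
    interleaveInter B m ⊆ interleaveInter B (m + 1) ∨
      interleaveInter B (m + 1) ⊆ interleaveInter B m := by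
  obtain ⟨c, rfl | rfl⟩ := Nat.even_or_odd' m
  · right
    rw [interleaveInter_two_mul, interleaveInter_two_mul_add_one]
    exact Set.inter_subset_left
  · left
    rw [interleaveInter_two_mul_add_one, show 2 * c + 1 + 1 = 2 * (c + 1) by ring,
      interleaveInter_two_mul]
    exact Set.inter_subset_right

theorem interleaveInter_inter_succ_subset (B : ℕ → Set α) (m : ℕ) :
    interleaveInter B m ∩ interleaveInter B (m + 1) ⊆ B (m / 2) ∩ B (m / 2 + 1) := by
  have half_add_two : (m + 1 + 1) / 2 = m / 2 + 1 := by omega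
  rw [← half_add_two]
  exact Set.inter_subset_inter Set.inter_subset_left Set.inter_subset_right

theorem ordConnected_setOf_mem_interleaveInter {a : α} (ha : {m | a ∈ B m}.OrdConnected) :
    {m | a ∈ interleaveInter B m}.OrdConnected := by
  have mono_half : Monotone fun m : ℕ => m / 2 := fun _ _ h => Nat.div_le_div_right h
  have mono_half_succ : Monotone fun m : ℕ => (m + 1) / 2 :=
    fun _ _ h => Nat.div_le_div_right (Nat.succ_le_succ h)
  exact (ha.preimage_mono mono_half).inter (ha.preimage_mono mono_half_succ)

end InterleaveInter

section ExtendByEmpty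

variable {α : Type*} {n : ℕ} {S : Fin n → Set α}

/-- The extension of a finite sequence of sets to all of `ℕ` by `∅`, which makes the neighbours of
a bag available without bounds on the index. -/
noncomputable def extendByEmpty (S : Fin n → Set α) : ℕ → Set α :=
  Function.extend Fin.val S fun _ => ∅

theorem extendByEmpty_val (S : Fin n → Set α) (i : Fin n) : extendByEmpty S i = S i :=
  Fin.val_injective.extend_apply S _ i

theorem extendByEmpty_of_lt (S : Fin n → Set α) {m : ℕ} (h : m < n) :
    extendByEmpty S m = S ⟨m, h⟩ :=
  extendByEmpty_val S ⟨m, h⟩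

theorem extendByEmpty_of_le (S : Fin n → Set α) {m : ℕ} (h : n ≤ m) : extendByEmpty S m = ∅ :=
  Function.extend_apply' _ _ _ fun ⟨i, hi⟩ => (hi ▸ i.isLt).not_ge h

theorem lt_of_mem_extendByEmpty {a : α} {m : ℕ} (h : a ∈ extendByEmpty S m) : m < n := by
  by_contra! hnm
  rwa [extendByEmpty_of_le S hnm] at h

theorem ordConnected_setOf_mem_extendByEmpty {a : α} (ha : {i | a ∈ S i}.OrdConnected) :
    {m | a ∈ extendByEmpty S m}.OrdConnected := by
  refine ⟨fun i hi p hp l ⟨hil, hlp⟩ => ?_⟩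
  have hin := lt_of_mem_extendByEmpty hi
  have hpn := lt_of_mem_extendByEmpty hp
  have hln := hlp.trans_lt hpn
  rw [Set.mem_ofPred_eq, extendByEmpty_of_lt S hin] at hi
  rw [Set.mem_ofPred_eq, extendByEmpty_of_lt S hpn] at hp
  rw [Set.mem_ofPred_eq, extendByEmpty_of_lt S hln]
  exact ha.out (x := ⟨i, hin⟩) hi (y := ⟨p, hpn⟩) hp ⟨hil, hlp⟩

end ExtendByEmpty

section CanonicalBags

variable {α : Type*} {n : ℕ}

/-- The sequence `S_1, S_1 ∩ S_2, S_2, …, S_n, ∅, ∅`, which turns a path-decomposition into a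
canonical one. The first `∅` is the intersection of `S_n` with the second; keeping both gives every
original bag the position `2 * i`, with `i` counted from `0`. -/
noncomputable def canonicalBags (S : Fin n → Set α) : Fin (2 * n + 1) → Set α :=
  fun m => interleaveInter (extendByEmpty S) m

theorem canonicalBags_last (S : Fin n → Set α) : canonicalBags S (Fin.last (2 * n)) = ∅ := by
  rw [canonicalBags, Fin.val_last, interleaveInter_two_mul, extendByEmpty_of_le S le_rfl]

theorem canonicalBags_subset_or_superset (S : Fin n → Set α) (i : Fin (2 * n)) :
    canonicalBags S i.castSucc ⊆ canonicalBags S i.succ ∨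
      canonicalBags S i.succ ⊆ canonicalBags S i.castSucc :=
  interleaveInter_subset_or_superset (extendByEmpty S) i

end CanonicalBags

namespace Struct

variable {σ : Type} {ar : σ → ℕ} {A : Struct σ ar} {n j k : ℕ} {S : Fin n → Set A.carrier}

theorem IsPathDecomp.ordConnected (hS : IsPathDecomp A S) (a : A.carrier) :
    {i | a ∈ S i}.OrdConnected :=
  ⟨fun i hi p hp l hl => hS.2 a i l p hl.1 hl.2 hi hp⟩

theorem DecompWidthLE.finite_extendByEmpty (hS : DecompWidthLE S j k) (m : ℕ) :
    (extendByEmpty S m).Finite := by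
  obtain hm | hm := lt_or_ge m n
  · rw [extendByEmpty_of_lt S hm]
    exact (hS.1 _).1
  · rw [extendByEmpty_of_le S hm]
    exact Set.finite_empty

theorem DecompWidthLE.ncard_extendByEmpty_le (hS : DecompWidthLE S j k) (m : ℕ) :
    (extendByEmpty S m).ncard ≤ k := by
  obtain hm | hm := lt_or_ge m n
  · rw [extendByEmpty_of_lt S hm]
    exact (hS.1 _).2
  · rw [extendByEmpty_of_le S hm, Set.ncard_empty]
    exact k.zero_le

theorem DecompWidthLE.ncard_extendByEmpty_inter_succ_le (hS : DecompWidthLE S j k) (m : ℕ) :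
    (extendByEmpty S m ∩ extendByEmpty S (m + 1)).ncard ≤ j := by
  obtain hm | hm := lt_or_ge (m + 1) n
  · rw [extendByEmpty_of_lt S (m.lt_succ_self.trans hm), extendByEmpty_of_lt S hm]
    exact hS.2 _ hm
  · rw [extendByEmpty_of_le S hm, Set.inter_empty, Set.ncard_empty]
    exact j.zero_le

theorem isPathDecomp_canonicalBags (hS : IsPathDecomp A S) :
    IsPathDecomp A (canonicalBags S) := by
  refine ⟨fun s t ht => ?_, fun a i l p hil hlp hi hp => ?_⟩
  · obtain ⟨i, hi⟩ := hS.1 s t ht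
    have bag_eq : canonicalBags S ⟨2 * i, by omega⟩ = S i := by
      rw [canonicalBags, interleaveInter_two_mul, extendByEmpty_val]
    exact ⟨_, bag_eq ▸ hi⟩
  · have bags_of_a : {m | a ∈ interleaveInter (extendByEmpty S) m}.OrdConnected :=
      ordConnected_setOf_mem_interleaveInter
        (ordConnected_setOf_mem_extendByEmpty (hS.ordConnected a))
    exact bags_of_a.out hi hp ⟨hil, hlp⟩

theorem decompWidthLE_canonicalBags (hS : DecompWidthLE S j k) :
    DecompWidthLE (canonicalBags S) j k := by
  refine ⟨fun m => ⟨?_, ?_⟩, fun m _ => ?_⟩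
  · exact (hS.finite_extendByEmpty _).subset Set.inter_subset_left
  · exact (Set.ncard_le_ncard Set.inter_subset_left (hS.finite_extendByEmpty _)).trans
      (hS.ncard_extendByEmpty_le _)
  · exact (Set.ncard_le_ncard (interleaveInter_inter_succ_subset _ _)
      ((hS.finite_extendByEmpty _).inter_of_left _)).trans
      (hS.ncard_extendByEmpty_inter_succ_le _)

end Struct

theorem stmt15_general {σ : Type} {ar : σ → ℕ} {j k : ℕ} {P : Struct σ ar}
    (hpw : Struct.PathwidthLE P j k) :
    ∃ (n : ℕ) (S : Fin (n + 1) → Set P.carrier),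
      Struct.IsPathDecomp P S ∧ Struct.DecompWidthLE S j k ∧
      S (Fin.last n) = ∅ ∧
      ∀ i : Fin n, S i.castSucc ⊆ S i.succ ∨ S i.succ ⊆ S i.castSucc := by
  obtain ⟨n, S, hS, hwidth⟩ := hpw
  exact ⟨2 * n, canonicalBags S, Struct.isPathDecomp_canonicalBags hS,
    Struct.decompWidthLE_canonicalBags hwidth, canonicalBags_last S,
    canonicalBags_subset_or_superset S⟩

/-- every finite structure with a path-decomposition of width at
most `(j,k)` has a canonical path-decomposition of width at most `(j,k)`:
one whose last bag is empty and in which any two consecutive bags are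
comparable under inclusion. -/
theorem stmt15 {σ : Type} {ar : σ → ℕ} [Finite σ] (j k : ℕ) (hjk : j ≤ k)
    (P : Struct σ ar) (hPfin : Finite P.carrier)
    (hpw : Struct.PathwidthLE P j k) :
    ∃ (n : ℕ) (S : Fin (n + 1) → Set P.carrier),
      Struct.IsPathDecomp P S ∧ Struct.DecompWidthLE S j k ∧
      S (Fin.last n) = ∅ ∧
      ∀ i : Fin n, S i.castSucc ⊆ S i.succ ∨ S i.succ ⊆ S i.castSucc :=
  stmt15_general hpw
end
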